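/- arXiv:2405.16364 — 5 statements merged into one kernel-verified Lean document; each statement's English description precedes it below -/
import Mathlib

section
/- Let n ≥ 1, γ ∈ (0,2) and β ∈ (0,1). There exists a constant C > 0, depending only on n, γ and β, such that for every Schwartz function f : ℝⁿ → ℝ and every x ∈ ℝⁿ, C · (‖f‖_{C^β})^{γ/(1−β)} · ∫_{ℝⁿ} |∇f(x) − ∇f(x+y)|² / |y|^{n+γ} dy ≥ |∇f(x)|^{2+γ/(1−β)}. -/
open MeasureTheory

/-!
Put `G = |∇f(x)|` and let `e` be the direction of `∇f(x)`. Over a segment of length `L` in the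
direction `e`, Hölder continuity allows `f` to increase by at most `N L ^ β`, whereas the constant
gradient `∇f(x)` would make it increase by `G L`. At the scale where `N L ^ β = G L / 2` the
gradient therefore differs from `∇f(x)` by at least `G / 2` on average along every such segment.
Averaging over the segments that start in the ball of radius `L` around `x` yields
`∫_{|y| ≤ 2L} |∇f(x) - ∇f(x + y)|² dy ≳ G² L ^ n`. On that ball the kernel `|y| ^ (-n - γ)` is at
least `(2 L) ^ (-n - γ)`, so `D_γ(∇f)(x) ≳ G² L ^ (-γ)`, and inserting
`L = (2 N / G) ^ (1 / (1 - β))` gives the bound.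
-/

open Metric Module
open scoped NNReal Gradient

section Holder

variable {X Y E F : Type*} [NormedAddCommGroup E] [NormedAddCommGroup F]

lemma holderWith_of_dist_le [PseudoMetricSpace X] [PseudoMetricSpace Y] {C r : ℝ≥0} {f : X → Y}
    (h : ∀ x y, dist (f x) (f y) ≤ C * dist x y ^ (r : ℝ)) : HolderWith C r f := fun x y ↦ by
  rw [edist_nndist, edist_nndist, ← ENNReal.coe_rpow_of_nonneg _ r.coe_nonneg, ← ENNReal.coe_mul,
    ENNReal.coe_le_coe]
  exact h x y

lemma exists_holderWith_of_lipschitzWith_of_isBounded_range [PseudoMetricSpace X]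
    [PseudoMetricSpace Y] {K r : ℝ≥0} {f : X → Y} (hr : r ≤ 1) (hf : LipschitzWith K f)
    (hb : Bornology.IsBounded (Set.range f)) : ∃ C, HolderWith C r f := by
  obtain ⟨M, hM⟩ := isBounded_range_iff.mp hb
  have h_zero : HolderWith M.toNNReal 0 f := holderWith_of_dist_le fun x y ↦ by
    simpa using Or.inl (hM x y)
  exact ⟨_, h_zero.of_le_of_le (holderWith_one.mpr hf) zero_le hr⟩

lemma exists_norm_sub_add_le_mul_min_one_norm {K : ℝ≥0} {u : E → F}
    (hu : LipschitzWith K u) (hb : Bornology.IsBounded (Set.range u)) :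
    ∃ C, ∀ x y, ‖u x - u (x + y)‖ ≤ C * min 1 ‖y‖ := by
  obtain ⟨M, hM⟩ := isBounded_range_iff.mp hb
  have hM_nonneg : 0 ≤ M := dist_nonneg.trans (hM 0 0)
  refine ⟨max M K, fun x y ↦ ?_⟩
  rw [mul_min_of_nonneg _ _ (hM_nonneg.trans (le_max_left _ _)), mul_one, ← dist_eq_norm]
  refine le_min ((hM _ _).trans (le_max_left _ _)) ((hu.dist_le_mul x (x + y)).trans ?_)
  rw [dist_self_add_right]
  gcongr
  exact le_max_right _ _

/-- The norm `‖f‖_{C^β} = sup |f| + sup_{x ≠ y} |f x - f y| / |x - y| ^ β` of a bounded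
`β`-Hölder function. Pairs with `x = y` contribute `0` to the second supremum, and a supremum over
an unbounded family has the junk value `0`. -/
noncomputable def holderNorm (β : ℝ) (f : E → ℝ) : ℝ≥0 :=
  ⟨(⨆ z, |f z|) + ⨆ p : E × E, |f p.1 - f p.2| / ‖p.1 - p.2‖ ^ β,
    add_nonneg (Real.iSup_nonneg fun _ ↦ abs_nonneg _) (Real.iSup_nonneg fun _ ↦ by positivity)⟩

lemma bddAbove_range_holder_quotient {C β : ℝ≥0} {f : E → ℝ} (hf : HolderWith C β f) :
    BddAbove (Set.range fun p : E × E ↦ |f p.1 - f p.2| / ‖p.1 - p.2‖ ^ (β : ℝ)) := by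
  refine ⟨C, Set.forall_mem_range.mpr fun p ↦ div_le_of_le_mul₀ (by positivity) C.coe_nonneg ?_⟩
  simpa only [dist_eq_norm, Real.norm_eq_abs] using hf.dist_le p.1 p.2

lemma holderWith_holderNorm {C β : ℝ≥0} {f : E → ℝ} (hf : HolderWith C β f) :
    HolderWith (holderNorm β f) β f := by
  refine holderWith_of_dist_le fun x y ↦ ?_
  rcases eq_or_ne x y with rfl | hxy
  · rw [dist_self]
    positivity
  have h_pos : 0 < ‖x - y‖ ^ (β : ℝ) := Real.rpow_pos_of_pos (norm_sub_pos_iff.mpr hxy) _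
  have h_quot : |f x - f y| / ‖x - y‖ ^ (β : ℝ) ≤ holderNorm β f :=
    (le_ciSup (bddAbove_range_holder_quotient hf) (x, y)).trans
      (le_add_of_nonneg_left (Real.iSup_nonneg fun _ ↦ abs_nonneg _))
  simpa only [dist_eq_norm, Real.norm_eq_abs] using (div_le_iff₀ h_pos).mp h_quot

end Holder

section Kernel

variable {E F : Type*} [NormedAddCommGroup E] [NormedSpace ℝ E] [FiniteDimensional ℝ E]
  [MeasurableSpace E] [BorelSpace E] [NormedAddCommGroup F] (μ : Measure E) [μ.IsAddHaarMeasure]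

lemma integrable_min_one_norm_pow_div_rpow [Nontrivial E] {γ : ℝ} {p : ℕ} (hγ : 0 < γ)
    (hγp : γ < p) :
    Integrable (fun y : E ↦ min 1 ‖y‖ ^ p / ‖y‖ ^ (finrank ℝ E + γ)) μ := by
  rw [integrable_fun_norm_addHaar (f := fun r ↦ min 1 r ^ p / r ^ (finrank ℝ E + γ)) μ,
    ← Set.Ioo_union_Ici_eq_Ioi one_pos]
  have h_radial {r s : ℝ} (hr : 0 < r) :
      r ^ (finrank ℝ E - 1) * (r ^ s / r ^ (finrank ℝ E + γ)) = r ^ (s - 1 - γ) := by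
    rw [← Real.rpow_natCast, Nat.cast_pred finrank_pos, ← Real.rpow_sub hr, ← Real.rpow_add hr]
    ring_nf
  refine IntegrableOn.union ?_ ((integrableOn_Ici_iff_integrableOn_Ioi).mpr ?_)
  · refine ((intervalIntegral.integrableOn_Ioo_rpow_iff (s := p - 1 - γ) one_pos).mpr
      (by linarith)).congr_fun (fun r hr ↦ ?_) measurableSet_Ioo
    rw [smul_eq_mul, min_eq_right hr.2.le, ← Real.rpow_natCast r p, h_radial hr.1]
  · refine (integrableOn_Ioi_rpow_of_lt (a := 0 - 1 - γ) (by linarith) one_pos).congr_fun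
      (fun r hr ↦ ?_) measurableSet_Ioi
    rw [Set.mem_Ioi] at hr
    have h_zero := h_radial (s := 0) (one_pos.trans hr)
    rw [Real.rpow_zero] at h_zero
    rw [smul_eq_mul, min_eq_left hr.le, one_pow, h_zero]

lemma integrable_norm_sub_pow_div_rpow [Nontrivial E] {γ : ℝ} {p : ℕ} {K : ℝ≥0}
    {u : E → F} (hu : LipschitzWith K u) (hb : Bornology.IsBounded (Set.range u)) (hγ : 0 < γ)
    (hγp : γ < p) (x : E) :
    Integrable (fun y ↦ ‖u x - u (x + y)‖ ^ p / ‖y‖ ^ (finrank ℝ E + γ)) μ := by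
  obtain ⟨C, hC⟩ := exists_norm_sub_add_le_mul_min_one_norm hu hb
  refine ((integrable_min_one_norm_pow_div_rpow μ hγ hγp).const_mul (C ^ p)).mono' ?_
    (.of_forall fun y ↦ ?_)
  · have h_num : Continuous fun y ↦ ‖u x - u (x + y)‖ ^ p := by
      have := hu.continuous
      fun_prop
    have h_den : Measurable fun y : E ↦ ‖y‖ ^ (finrank ℝ E + γ) := by fun_prop
    exact (h_num.measurable.div h_den).aestronglyMeasurable
  · rw [Real.norm_of_nonneg (by positivity), ← mul_div_assoc, ← mul_pow]
    gcongr
    exact hC x y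

/-- The hypothesis `H 0 = 0` matches the junk value `H 0 / 0 = 0` of the integrand at the origin. -/
lemma setIntegral_closedBall_div_rpow_le_integral {H : E → ℝ} {p R : ℝ} (hp : 0 ≤ p)
    (hH : Continuous H) (hH_nonneg : ∀ y, 0 ≤ H y) (hH_zero : H 0 = 0)
    (h_int : Integrable (fun y ↦ H y / ‖y‖ ^ p) μ) :
    (∫ y in closedBall 0 R, H y ∂μ) / R ^ p ≤ ∫ y, H y / ‖y‖ ^ p ∂μ := by
  have h_quot_nonneg (y : E) : 0 ≤ H y / ‖y‖ ^ p := div_nonneg (hH_nonneg y) (by positivity)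
  calc (∫ y in closedBall 0 R, H y ∂μ) / R ^ p
      = ∫ y in closedBall 0 R, H y / R ^ p ∂μ := (integral_div _ _).symm
    _ ≤ ∫ y in closedBall 0 R, H y / ‖y‖ ^ p ∂μ := by
        refine setIntegral_mono_on ?_ h_int.integrableOn measurableSet_closedBall fun y hy ↦ ?_
        · exact (hH.div_const _).continuousOn.integrableOn_compact (isCompact_closedBall _ _)
        rcases eq_or_ne y 0 with rfl | hy_ne
        · simp only [hH_zero, zero_div, le_refl]
        have : 0 < ‖y‖ := norm_pos_iff.mpr hy_ne
        gcongr
        · exact hH_nonneg y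
        · exact mem_closedBall_zero_iff.mp hy
    _ ≤ ∫ y, H y / ‖y‖ ^ p ∂μ := setIntegral_le_integral h_int (.of_forall h_quot_nonneg)

end Kernel

section Balls

lemma measureReal_closedBall_pos {X : Type*} [PseudoMetricSpace X] [ProperSpace X]
    [MeasurableSpace X] (μ : Measure X) [μ.IsOpenPosMeasure] [IsFiniteMeasureOnCompacts μ] (x : X)
    {r : ℝ} (hr : 0 < r) : 0 < μ.real (closedBall x r) :=
  ENNReal.toReal_pos (measure_closedBall_pos μ x hr).ne' measure_closedBall_lt_top.ne


variable {E : Type*} [NormedAddCommGroup E] [NormedSpace ℝ E] [FiniteDimensional ℝ E]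
  [MeasurableSpace E] [BorelSpace E] (μ : Measure E) [μ.IsAddHaarMeasure] {H : E → ℝ}

lemma setIntegral_closedBall_comp_add_le (hH : Continuous H) (hH_nonneg : ∀ y, 0 ≤ H y) (v : E)
    (R : ℝ) :
    ∫ y in closedBall 0 R, H (y + v) ∂μ ≤ ∫ y in closedBall 0 (R + ‖v‖), H y ∂μ := by
  have h_preimage : closedBall 0 R = (· + v) ⁻¹' closedBall v R := by
    ext y
    simp only [mem_closedBall, Set.mem_preimage, dist_eq_norm, sub_zero, add_sub_cancel_right]
  rw [h_preimage, (measurePreserving_add_right μ v).setIntegral_preimage_emb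
    (measurableEmbedding_addRight v)]
  exact setIntegral_mono_set (hH.continuousOn.integrableOn_compact (isCompact_closedBall _ _))
    (.of_forall hH_nonneg) (closedBall_subset_closedBall' (by rw [dist_zero_right])).eventuallyLE

lemma mul_measureReal_closedBall_le_setIntegral (hH : Continuous H) (hH_nonneg : ∀ y, 0 ≤ H y)
    {e : E} (he : ‖e‖ ≤ 1) {A L : ℝ} (hL : 0 < L)
    (h_seg : ∀ y, A * L ≤ ∫ t in 0..L, H (y + t • e)) :
    A * μ.real (closedBall 0 L) ≤ ∫ y in closedBall 0 (2 * L), H y ∂μ := by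
  have h_int : Integrable (Function.uncurry fun (t : ℝ) (y : E) ↦ H (y + t • e))
      ((volume.restrict (Set.uIoc 0 L)).prod (μ.restrict (closedBall 0 L))) := by
    have h_cont : Continuous (Function.uncurry fun (t : ℝ) (y : E) ↦ H (y + t • e)) := by
      unfold Function.uncurry
      fun_prop
    rw [Measure.prod_restrict]
    exact (h_cont.continuousOn.integrableOn_compact
      (isCompact_uIcc.prod (isCompact_closedBall 0 L))).mono_set
        (Set.prod_mono Set.uIoc_subset_uIcc subset_rfl)
  refine le_of_mul_le_mul_left ?_ hL
  calc L * (A * μ.real (closedBall 0 L)) = A * L * μ.real (closedBall 0 L) := by ring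
    _ ≤ ∫ y in closedBall 0 L, (∫ t in 0..L, H (y + t • e)) ∂μ := by
        refine setIntegral_ge_of_const_le_real measurableSet_closedBall
          measure_closedBall_lt_top.ne (fun y _ ↦ h_seg y) ?_
        simpa only [IntegrableOn, intervalIntegral.integral_of_le hL.le, Set.uIoc_of_le hL.le,
          Function.uncurry_apply_pair] using h_int.integral_prod_right
    _ = ∫ t in 0..L, (∫ y in closedBall 0 L, H (y + t • e) ∂μ) :=
        (intervalIntegral_integral_swap h_int).symm
    _ ≤ ∫ t in 0..L, (∫ y in closedBall 0 (2 * L), H y ∂μ) := by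
        refine intervalIntegral.integral_mono_on hL.le
          (intervalIntegrable_iff.mpr h_int.integral_prod_left) intervalIntegrable_const
          fun t ht ↦ (setIntegral_closedBall_comp_add_le μ hH hH_nonneg _ _).trans ?_
        have h_norm : ‖t • e‖ ≤ L := by
          rw [norm_smul, Real.norm_of_nonneg ht.1]
          exact (mul_le_of_le_one_right ht.1 he).trans ht.2
        exact setIntegral_mono_set (hH.continuousOn.integrableOn_compact (isCompact_closedBall _ _))
          (.of_forall hH_nonneg) (closedBall_subset_closedBall (by linarith)).eventuallyLE
    _ = L * ∫ y in closedBall 0 (2 * L), H y ∂μ := by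
        rw [intervalIntegral.integral_const, sub_zero, smul_eq_mul]

end Balls

section Gradient

lemma sq_div_four_mul_le_integral_sub_sq {g : ℝ → ℝ} {G L : ℝ} (hg : Continuous g) (hG : 0 ≤ G)
    (hL : 0 ≤ L) (h_mean : ∫ t in 0..L, g t ≤ G * L / 2) :
    G ^ 2 / 4 * L ≤ ∫ t in 0..L, (G - g t) ^ 2 := by
  calc G ^ 2 / 4 * L ≤ G ^ 2 * 3 / 4 * L - G * ∫ t in 0..L, g t := by
        linarith [mul_le_mul_of_nonneg_left h_mean hG]
    _ = ∫ t in 0..L, (G ^ 2 * 3 / 4 - G * g t) := by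
        rw [intervalIntegral.integral_sub intervalIntegrable_const
          ((hg.const_mul G).intervalIntegrable _ _), intervalIntegral.integral_const,
          intervalIntegral.integral_const_mul, sub_zero, smul_eq_mul, mul_comm L]
    _ ≤ ∫ t in 0..L, (G - g t) ^ 2 :=
        intervalIntegral.integral_mono_on hL (Continuous.intervalIntegrable (by fun_prop) _ _)
          (Continuous.intervalIntegrable (by fun_prop) _ _)
          fun t _ ↦ by linarith [sq_nonneg (G / 2 - g t)]

variable {E : Type*} [NormedAddCommGroup E] [InnerProductSpace ℝ E] [CompleteSpace E] {f : E → ℝ}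

lemma continuous_gradient_of_contDiff (hf : ContDiff ℝ 1 f) : Continuous (∇ f) :=
  (InnerProductSpace.toDual ℝ E).symm.continuous.comp (hf.continuous_fderiv one_ne_zero)

lemma integral_inner_gradient_eq_sub (hf : ContDiff ℝ 1 f) (z e : E) (L : ℝ) :
    ∫ t in 0..L, inner ℝ (∇ f (z + t • e)) e = f (z + L • e) - f z := by
  have h_deriv (t : ℝ) :
      HasDerivAt (fun t ↦ f (z + t • e)) (inner ℝ (∇ f (z + t • e)) e) t := by
    have h_line : HasDerivAt (fun t : ℝ ↦ z + t • e) e t := by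
      simpa using ((hasDerivAt_id t).smul_const e).const_add z
    rw [inner_gradient_left]
    exact ((hf.differentiable one_ne_zero) _).hasFDerivAt.comp_hasDerivAt t h_line
  have := continuous_gradient_of_contDiff hf
  rw [intervalIntegral.integral_eq_sub_of_hasDerivAt (fun t _ ↦ h_deriv t)
    (Continuous.intervalIntegrable (by fun_prop) _ _), zero_smul, add_zero]

lemma sq_inner_div_four_mul_le_integral_norm_sub_gradient_sq (hf : ContDiff ℝ 1 f) {v z e : E}
    {L : ℝ} (he : ‖e‖ ≤ 1) (hv : 0 ≤ inner ℝ v e) (hL : 0 ≤ L)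
    (h_incr : f (z + L • e) - f z ≤ inner ℝ v e * L / 2) :
    inner ℝ v e ^ 2 / 4 * L ≤ ∫ t in 0..L, ‖v - ∇ f (z + t • e)‖ ^ 2 := by
  have := continuous_gradient_of_contDiff hf
  rw [← integral_inner_gradient_eq_sub hf] at h_incr
  refine (sq_div_four_mul_le_integral_sub_sq (by fun_prop) hv hL h_incr).trans ?_
  refine intervalIntegral.integral_mono_on hL (Continuous.intervalIntegrable (by fun_prop) _ _)
    (Continuous.intervalIntegrable (by fun_prop) _ _) fun t _ ↦ ?_
  rw [← inner_sub_left, ← sq_abs]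
  gcongr
  exact (abs_real_inner_le_norm _ _).trans (mul_le_of_le_one_right (norm_nonneg _) he)

lemma pos_of_holderWith_of_gradient_ne_zero {N β : ℝ≥0} {x : E} (hf : HolderWith N β f)
    (hx : ∇ f x ≠ 0) : 0 < N := by
  refine pos_of_ne_zero fun hN ↦ hx ?_
  rw [hN, holderWith_zero_iff] at hf
  rw [funext fun y ↦ hf y x, gradient_fun_const]

end Gradient

section LowerBound

variable {E : Type*} [NormedAddCommGroup E] [InnerProductSpace ℝ E] [FiniteDimensional ℝ E]
  [MeasurableSpace E] [BorelSpace E] (μ : Measure E) [μ.IsAddHaarMeasure] {f : E → ℝ} {x : E}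

lemma sq_norm_gradient_mul_le_setIntegral (hf : ContDiff ℝ 1 f) (hx : ∇ f x ≠ 0) {L : ℝ}
    (hL : 0 < L) (h_incr : ∀ z v, ‖v‖ = L → f (z + v) - f z ≤ ‖∇ f x‖ * L / 2) :
    ‖∇ f x‖ ^ 2 / 4 * μ.real (closedBall 0 L) ≤
      ∫ y in closedBall 0 (2 * L), ‖∇ f x - ∇ f (x + y)‖ ^ 2 ∂μ := by
  set e := ‖∇ f x‖⁻¹ • ∇ f x
  have he : ‖e‖ = 1 := norm_smul_inv_norm hx
  have h_inner : inner ℝ (∇ f x) e = ‖∇ f x‖ := by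
    rw [real_inner_smul_right, real_inner_self_eq_norm_sq, sq,
      inv_mul_cancel_left₀ (norm_ne_zero_iff.mpr hx)]
  have := continuous_gradient_of_contDiff hf
  refine mul_measureReal_closedBall_le_setIntegral μ (by fun_prop) (fun y ↦ by positivity) he.le hL
    fun y ↦ ?_
  have h_norm : ‖L • e‖ = L := by rw [norm_smul, he, mul_one, Real.norm_of_nonneg hL.le]
  have h_seg := sq_inner_div_four_mul_le_integral_norm_sub_gradient_sq hf (v := ∇ f x) (z := x + y)
    he.le (h_inner ▸ norm_nonneg _) hL.le (h_inner ▸ h_incr _ _ h_norm)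
  rw [h_inner] at h_seg
  simpa only [add_assoc] using h_seg

lemma sq_norm_gradient_le_rpow_mul_integral (hf : ContDiff ℝ 1 f) (hx : ∇ f x ≠ 0) {γ L : ℝ}
    (hγ : 0 ≤ γ) (hL : 0 < L) (h_incr : ∀ z v, ‖v‖ = L → f (z + v) - f z ≤ ‖∇ f x‖ * L / 2)
    (h_int : Integrable
      (fun y ↦ ‖∇ f x - ∇ f (x + y)‖ ^ 2 / ‖y‖ ^ (finrank ℝ E + γ)) μ) :
    ‖∇ f x‖ ^ 2 ≤ 4 * 2 ^ (finrank ℝ E + γ) / μ.real (closedBall 0 1) *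
      (L ^ γ * ∫ y, ‖∇ f x - ∇ f (x + y)‖ ^ 2 / ‖y‖ ^ (finrank ℝ E + γ) ∂μ) := by
  have h_ball := measureReal_closedBall_pos μ (0 : E) one_pos
  have := continuous_gradient_of_contDiff hf
  have h_ball_integral := setIntegral_closedBall_div_rpow_le_integral μ
    (H := fun y ↦ ‖∇ f x - ∇ f (x + y)‖ ^ 2) (R := 2 * L) (by positivity) (by fun_prop)
    (fun y ↦ by positivity) (by simp) h_int
  have h_lower := (div_le_div_of_nonneg_right
    (sq_norm_gradient_mul_le_setIntegral μ hf hx hL h_incr) (by positivity)).trans h_ball_integral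
  rw [Measure.addHaar_real_closedBall' μ 0 hL.le, Real.mul_rpow zero_le_two hL.le,
    Real.rpow_add hL, Real.rpow_natCast] at h_lower
  refine le_trans (le_of_eq ?_) (mul_le_mul_of_nonneg_left (mul_le_mul_of_nonneg_left h_lower
    (by positivity : 0 ≤ L ^ γ)) (by positivity))
  field_simp

lemma exists_pos_mul_rpow_eq_half {N G β : ℝ} (hN : 0 < N) (hG : 0 < G) (hβ : β < 1) (γ : ℝ) :
    ∃ L > 0, N * L ^ β = G * L / 2 ∧ L ^ γ = (2 * N / G) ^ (γ / (1 - β)) := by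
  have h_exp : 1 - β ≠ 0 := (sub_pos.mpr hβ).ne'
  have h_rpow (s : ℝ) : ((2 * N / G) ^ (1 / (1 - β))) ^ s = (2 * N / G) ^ (s / (1 - β)) := by
    rw [← Real.rpow_mul (by positivity), one_div_mul_eq_div]
  refine ⟨(2 * N / G) ^ (1 / (1 - β)), by positivity, ?_, h_rpow γ⟩
  have h_split : 1 / (1 - β) = β / (1 - β) + 1 := by field_simp; ring
  rw [h_rpow, h_split, Real.rpow_add_one (by positivity)]
  field_simp

theorem constantin_vicol_holder_lower_bound_general {γ : ℝ} (hγ : 0 ≤ γ) {β : ℝ≥0} (hβ : β < 1) :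
    ∃ C > (0 : ℝ), ∀ (f : E → ℝ) (x : E) (N : ℝ≥0), ContDiff ℝ 1 f → HolderWith N β f →
      Integrable (fun y ↦ ‖∇ f x - ∇ f (x + y)‖ ^ 2 / ‖y‖ ^ (finrank ℝ E + γ)) μ →
      ‖∇ f x‖ ^ (2 + γ / (1 - β)) ≤ C * N ^ (γ / (1 - β)) *
        ∫ y, ‖∇ f x - ∇ f (x + y)‖ ^ 2 / ‖y‖ ^ (finrank ℝ E + γ) ∂μ := by
  have h_ball := measureReal_closedBall_pos μ (0 : E) one_pos
  set A := 4 * 2 ^ (finrank ℝ E + γ) / μ.real (closedBall 0 1)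
  have hβ_real : (β : ℝ) < 1 := by exact_mod_cast hβ
  have : 0 ≤ γ / (1 - β) := div_nonneg hγ (sub_pos.mpr hβ_real).le
  refine ⟨A * 2 ^ (γ / (1 - β)), by positivity, fun f x N hf hN h_int ↦ ?_⟩
  set D := ∫ y, ‖∇ f x - ∇ f (x + y)‖ ^ 2 / ‖y‖ ^ (finrank ℝ E + γ) ∂μ
  have : 0 ≤ D := integral_nonneg fun y ↦ by positivity
  rcases eq_or_ne (∇ f x) 0 with hx | hx
  · rw [hx, norm_zero, Real.zero_rpow (by positivity)]
    positivity
  have hG : 0 < ‖∇ f x‖ := norm_pos_iff.mpr hx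
  have hN_pos : (0 : ℝ) < N := NNReal.coe_pos.mpr (pos_of_holderWith_of_gradient_ne_zero hN hx)
  obtain ⟨L, hL, h_scale, h_rpow⟩ := exists_pos_mul_rpow_eq_half hN_pos hG hβ_real γ
  have h_incr (z v : E) (hv : ‖v‖ = L) : f (z + v) - f z ≤ ‖∇ f x‖ * L / 2 := by
    have h_dist := hN.dist_le (z + v) z
    rw [dist_self_add_left, hv, h_scale] at h_dist
    exact (le_abs_self _).trans h_dist
  calc ‖∇ f x‖ ^ (2 + γ / (1 - β))
      = ‖∇ f x‖ ^ 2 * ‖∇ f x‖ ^ (γ / (1 - β)) := by rw [Real.rpow_add hG, Real.rpow_two]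
    _ ≤ A * (L ^ γ * D) * ‖∇ f x‖ ^ (γ / (1 - β)) := by
        gcongr
        exact sq_norm_gradient_le_rpow_mul_integral μ hf hx hγ hL h_incr h_int
    _ = A * 2 ^ (γ / (1 - β)) * N ^ (γ / (1 - β)) * D := by
        rw [h_rpow, Real.div_rpow (by positivity) hG.le, Real.mul_rpow zero_le_two N.coe_nonneg]
        field_simp

end LowerBound

section Schwartz

variable {E F : Type*} [NormedAddCommGroup E] [NormedAddCommGroup F] [NormedSpace ℝ F]

lemma schwartzMap_isBounded_range [NormedSpace ℝ E] (f : SchwartzMap E F) :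
    Bornology.IsBounded (Set.range f) :=
  f.toBoundedContinuousFunction.isBounded_range

lemma schwartzMap_exists_lipschitzWith [NormedSpace ℝ E] (f : SchwartzMap E F) :
    ∃ K, LipschitzWith K f := by
  obtain ⟨K, -, hK⟩ :=
    (schwartzMap_isBounded_range (SchwartzMap.fderivCLM ℝ E F f)).exists_pos_norm_le
  exact ⟨K.toNNReal, lipschitzWith_of_nnnorm_fderiv_le f.differentiable fun x ↦
    NNReal.le_toNNReal_of_coe_le (hK _ (Set.mem_range_self x))⟩

lemma schwartzMap_exists_holderWith [NormedSpace ℝ E] {r : ℝ≥0} (hr : r ≤ 1) (f : SchwartzMap E F) :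
    ∃ C, HolderWith C r f := by
  obtain ⟨K, hK⟩ := schwartzMap_exists_lipschitzWith f
  exact exists_holderWith_of_lipschitzWith_of_isBounded_range hr hK (schwartzMap_isBounded_range f)

variable [InnerProductSpace ℝ E]

lemma schwartzMap_gradient_eq_comp [CompleteSpace E] (f : SchwartzMap E ℝ) :
    ∇ f = (InnerProductSpace.toDual ℝ E).symm ∘ SchwartzMap.fderivCLM ℝ E ℝ f :=
  rfl

lemma schwartzMap_exists_lipschitzWith_gradient [CompleteSpace E] (f : SchwartzMap E ℝ) :
    ∃ K, LipschitzWith K (∇ f) := by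
  obtain ⟨K, hK⟩ := schwartzMap_exists_lipschitzWith (SchwartzMap.fderivCLM ℝ E ℝ f)
  exact ⟨1 * K, (InnerProductSpace.toDual ℝ E).symm.lipschitz.comp hK⟩

lemma schwartzMap_isBounded_range_gradient [CompleteSpace E] (f : SchwartzMap E ℝ) :
    Bornology.IsBounded (Set.range (∇ f)) := by
  rw [schwartzMap_gradient_eq_comp, Set.range_comp]
  exact (InnerProductSpace.toDual ℝ E).symm.lipschitz.isBounded_image
    (schwartzMap_isBounded_range _)

lemma schwartzMap_integrable_norm_gradient_sub_sq_div_rpow [FiniteDimensional ℝ E] [Nontrivial E]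
    [MeasurableSpace E] [BorelSpace E] (μ : Measure E) [μ.IsAddHaarMeasure] {γ : ℝ} (hγ : 0 < γ)
    (hγ_two : γ < 2) (f : SchwartzMap E ℝ) (x : E) :
    Integrable (fun y ↦ ‖∇ f x - ∇ f (x + y)‖ ^ 2 / ‖y‖ ^ (finrank ℝ E + γ)) μ := by
  obtain ⟨K, hK⟩ := schwartzMap_exists_lipschitzWith_gradient f
  exact integrable_norm_sub_pow_div_rpow μ hK (schwartzMap_isBounded_range_gradient f) hγ
    (by exact_mod_cast hγ_two) x

end Schwartz

/-- Hölder-norm version of the Constantin–Vicol nonlinear lower bound: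
`D_γ(∇f)(x) ≥ |∇f(x)|^{2+γ/(1-β)} / (C ‖f‖_{C^β}^{γ/(1-β)})`. -/
theorem constantin_vicol_holder_lower_bound (n : ℕ) (hn : 1 ≤ n) (γ β : ℝ)
    (hγ : γ ∈ Set.Ioo (0 : ℝ) 2) (hβ : β ∈ Set.Ioo (0 : ℝ) 1) :
    ∃ C > (0 : ℝ), ∀ (f : SchwartzMap (EuclideanSpace ℝ (Fin n)) ℝ)
      (x : EuclideanSpace ℝ (Fin n)),
      C * ((⨆ z : EuclideanSpace ℝ (Fin n), |f z|) +
            ⨆ p : EuclideanSpace ℝ (Fin n) × EuclideanSpace ℝ (Fin n),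
              |f p.1 - f p.2| / ‖p.1 - p.2‖ ^ β) ^ (γ / (1 - β)) *
          ∫ y : EuclideanSpace ℝ (Fin n),
            ‖gradient (⇑f) x - gradient (⇑f) (x + y)‖ ^ 2 / ‖y‖ ^ ((n : ℝ) + γ) ≥
        ‖gradient (⇑f) x‖ ^ (2 + γ / (1 - β)) := by
  lift β to ℝ≥0 using hβ.1.le
  have : Nonempty (Fin n) := ⟨⟨0, hn⟩⟩
  obtain ⟨C, hC, h_bound⟩ := constantin_vicol_holder_lower_bound_general
    (volume : Measure (EuclideanSpace ℝ (Fin n))) hγ.1.le hβ.2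
  refine ⟨C, hC, fun f x ↦ ?_⟩
  obtain ⟨K, hK⟩ := schwartzMap_exists_holderWith (r := β) hβ.2.le f
  have h_int := schwartzMap_integrable_norm_gradient_sub_sq_div_rpow volume hγ.1 hγ.2 f x
  rw [finrank_euclideanSpace_fin] at h_bound h_int
  exact h_bound f x _ (f.smooth 1) (holderWith_holderNorm hK) h_int
end

section
/- Let n ≥ 1, s ∈ (0,1), and let θ : ℝⁿ → ℝ be a Schwartz function. Then ∬_{ℝⁿ×ℝⁿ} θ(x)² (θ(x) − θ(y)) / |x − y|^{n+s} dx dy = (1/2) ∬_{ℝⁿ×ℝⁿ} (θ(x) + θ(y)) (θ(x) − θ(y))² / |x − y|^{n+s} dx dy, both double integrals being absolutely convergent. -/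
open MeasureTheory

/-!
The integrand `F(x, y) = θ(x)² (θ(x) - θ(y)) / |x - y|^(n+s)` is integrable because the oscillation
of `θ` is bounded by a multiple of `min(1, |x - y|)`: in polar coordinates the resulting kernel
`min(1, |z|) / |z|^(n+s)` is `r^(-s)` near `0` and `r^(-1-s)` near `∞`, so `F` is dominated by an
`L¹` function of `x` times an `L¹` function of `x - y`. Exchanging the variables then replaces `∬ F`
by half of `∬ (F(x, y) + F(y, x))`, and `(a² - b²) (a - b) = (a + b) (a - b)²`.

The same argument works for `h(x) (f(x) - f(y))` in place of `θ(x)² (θ(x) - θ(y))`, with `h`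
integrable and `f` bounded and Hölder continuous of an exponent larger than `s`.
-/

open Module (finrank)
open scoped NNReal

lemma integral_prod_eq_half_smul_integral_add_comp_swap {α F : Type*} [MeasurableSpace α]
    {μ : Measure α} [SFinite μ] [NormedAddCommGroup F] [NormedSpace ℝ F] {f : α × α → F}
    (hf : Integrable f (μ.prod μ)) :
    ∫ p, f p ∂μ.prod μ = (1 / 2 : ℝ) • ∫ p, (f p + f p.swap) ∂μ.prod μ := by
  have hadd : ∫ p, (f p + f p.swap) ∂μ.prod μ = ∫ p, f p ∂μ.prod μ + ∫ p, f p.swap ∂μ.prod μ :=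
    integral_add hf hf.swap
  rw [hadd, integral_prod_swap, ← two_smul ℝ, smul_smul]
  norm_num

lemma exists_dist_le_mul_min_one_rpow_of_holderWith {X Y : Type*} [PseudoMetricSpace X]
    [PseudoMetricSpace Y] {C r : ℝ≥0} {f : X → Y} (hf : HolderWith C r f)
    (hb : Bornology.IsBounded (Set.range f)) :
    ∃ M : ℝ, ∀ x y, dist (f x) (f y) ≤ M * min 1 (dist x y ^ (r : ℝ)) := by
  obtain ⟨D, hD⟩ := Metric.isBounded_range_iff.mp hb
  refine ⟨max D C, fun x y => ?_⟩
  rw [mul_min_of_nonneg _ _ (le_max_of_le_right C.coe_nonneg), mul_one]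
  refine le_min ((hD x y).trans (le_max_left D C)) ((hf.dist_le x y).trans ?_)
  gcongr
  exact le_max_right D C

lemma schwartzMap_exists_lipschitzWith_s5 {E F : Type*} [NormedAddCommGroup E] [NormedSpace ℝ E]
    [NormedAddCommGroup F] [NormedSpace ℝ F] (θ : SchwartzMap E F) :
    ∃ C : ℝ≥0, LipschitzWith C θ := by
  let θ' := (SchwartzMap.fderivCLM ℝ E F θ).toBoundedContinuousFunction
  exact ⟨‖θ'‖₊, lipschitzWith_of_nnnorm_fderiv_le θ.differentiable θ'.nnnorm_coe_le_nnnorm⟩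

section Kernel

lemma integrableOn_Ioi_min_one_rpow_mul_rpow {r s : ℝ} (hs : 0 < s) (hsr : s < r) :
    IntegrableOn (fun t : ℝ => min 1 (t ^ r) * t ^ (-1 - s)) (Set.Ioi 0) := by
  have hr : 0 < r := hs.trans hsr
  rw [← Set.Ioc_union_Ioi_eq_Ioi (zero_le_one' ℝ)]
  refine IntegrableOn.union ?_ ?_
  · have hnear : IntegrableOn (fun t : ℝ => t ^ (r - 1 - s)) (Set.Ioc 0 1) :=
      (intervalIntegrable_iff_integrableOn_Ioc_of_le zero_le_one).1
        (intervalIntegral.intervalIntegrable_rpow' (by linarith))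
    refine hnear.congr_fun (fun t ht => ?_) measurableSet_Ioc
    rw [min_eq_right (Real.rpow_le_one ht.1.le ht.2 hr.le), ← Real.rpow_add ht.1]
    ring_nf
  · have hfar : IntegrableOn (fun t : ℝ => t ^ (-1 - s)) (Set.Ioi 1) :=
      integrableOn_Ioi_rpow_of_lt (by linarith) one_pos
    refine hfar.congr_fun (fun t ht => ?_) measurableSet_Ioi
    rw [min_eq_left (Real.one_le_rpow (Set.mem_Ioi.mp ht).le hr.le), one_mul]

variable {E : Type*} [NormedAddCommGroup E] [NormedSpace ℝ E] [FiniteDimensional ℝ E]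
  [Nontrivial E] [MeasurableSpace E] [BorelSpace E] (μ : Measure E) [μ.IsAddHaarMeasure]

lemma integrable_min_one_norm_rpow_div_norm_rpow {r s : ℝ} (hs : 0 < s) (hsr : s < r) :
    Integrable (fun z : E => min 1 (‖z‖ ^ r) / ‖z‖ ^ ((finrank ℝ E : ℝ) + s)) μ := by
  refine (integrable_fun_norm_addHaar μ
    (f := fun t : ℝ => min 1 (t ^ r) / t ^ ((finrank ℝ E : ℝ) + s))).2 ?_
  refine (integrableOn_Ioi_min_one_rpow_mul_rpow hs hsr).congr_fun (fun t ht => ?_)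
    measurableSet_Ioi
  have hpow : t ^ (finrank ℝ E - 1) = t ^ (-1 - s) * t ^ ((finrank ℝ E : ℝ) + s) := by
    rw [← Real.rpow_add ht, ← Real.rpow_natCast, Nat.cast_pred Module.finrank_pos]
    ring_nf
  have hne : t ^ ((finrank ℝ E : ℝ) + s) ≠ 0 := (Real.rpow_pos_of_pos ht _).ne'
  simp only [smul_eq_mul, hpow]
  field_simp

variable {μ}

lemma integrable_mul_sub_div_norm_rpow {C r : ℝ≥0} {s : ℝ} (hs : 0 < s) (hsr : s < r)
    {h f : E → ℝ} (hh : Integrable h μ) (hf : HolderWith C r f)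
    (hb : Bornology.IsBounded (Set.range f)) :
    Integrable (fun p : E × E =>
      h p.1 * (f p.1 - f p.2) / ‖p.1 - p.2‖ ^ ((finrank ℝ E : ℝ) + s)) (μ.prod μ) := by
  obtain ⟨M, hM⟩ := exists_dist_le_mul_min_one_rpow_of_holderWith hf hb
  let k : E → ℝ := fun z => min 1 (‖z‖ ^ (r : ℝ)) / ‖z‖ ^ ((finrank ℝ E : ℝ) + s)
  have hk : Integrable k μ := integrable_min_one_norm_rpow_div_norm_rpow μ hs hsr
  have hdom : Integrable (fun p : E × E => M * (‖h p.1‖ * k (p.2 - p.1))) (μ.prod μ) :=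
    ((measurePreserving_prod_sub μ μ).integrable_comp_of_integrable
      (hh.norm.mul_prod hk)).const_mul M
  refine hdom.mono' ?_ (.of_forall fun p => ?_)
  · have hfc : Continuous f := hf.continuous (by exact_mod_cast hs.trans hsr)
    have hdiff : Measurable fun p : E × E => f p.1 - f p.2 := by fun_prop
    have hker : Measurable fun p : E × E => ‖p.1 - p.2‖ ^ ((finrank ℝ E : ℝ) + s) := by fun_prop
    exact (hh.aestronglyMeasurable.comp_fst.mul hdiff.aestronglyMeasurable).div₀
      hker.aestronglyMeasurable
  · have hosc : ‖f p.1 - f p.2‖ ≤ M * min 1 (‖p.1 - p.2‖ ^ (r : ℝ)) := by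
      simpa only [dist_eq_norm] using hM p.1 p.2
    calc ‖h p.1 * (f p.1 - f p.2) / ‖p.1 - p.2‖ ^ ((finrank ℝ E : ℝ) + s)‖
        = ‖h p.1‖ * ‖f p.1 - f p.2‖ / ‖p.1 - p.2‖ ^ ((finrank ℝ E : ℝ) + s) := by
          rw [norm_div, norm_mul, Real.norm_rpow_of_nonneg (norm_nonneg _), norm_norm]
      _ ≤ ‖h p.1‖ * (M * min 1 (‖p.1 - p.2‖ ^ (r : ℝ))) /
            ‖p.1 - p.2‖ ^ ((finrank ℝ E : ℝ) + s) := by gcongr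
      _ = M * (‖h p.1‖ * k (p.2 - p.1)) := by
          simp only [k, norm_sub_rev p.2 p.1]
          ring

end Kernel

theorem symmetrization_identity_general {E : Type*} [NormedAddCommGroup E] [NormedSpace ℝ E]
    [FiniteDimensional ℝ E] [Nontrivial E] [MeasurableSpace E] [BorelSpace E] {μ : Measure E}
    [μ.IsAddHaarMeasure] {C r : ℝ≥0} {s : ℝ} (hs : 0 < s) (hsr : s < r) {h f : E → ℝ}
    (hh : Integrable h μ) (hf : HolderWith C r f) (hb : Bornology.IsBounded (Set.range f)) :
    Integrable (fun p : E × E =>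
        h p.1 * (f p.1 - f p.2) / ‖p.1 - p.2‖ ^ ((finrank ℝ E : ℝ) + s)) (μ.prod μ) ∧
    Integrable (fun p : E × E => (h p.1 - h p.2) * (f p.1 - f p.2) /
        ‖p.1 - p.2‖ ^ ((finrank ℝ E : ℝ) + s)) (μ.prod μ) ∧
    ∫ p : E × E, h p.1 * (f p.1 - f p.2) /
        ‖p.1 - p.2‖ ^ ((finrank ℝ E : ℝ) + s) ∂μ.prod μ =
      (1 / 2) * ∫ p : E × E, (h p.1 - h p.2) * (f p.1 - f p.2) /
        ‖p.1 - p.2‖ ^ ((finrank ℝ E : ℝ) + s) ∂μ.prod μ := by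
  have hsymm (p : E × E) :
      (h p.1 - h p.2) * (f p.1 - f p.2) / ‖p.1 - p.2‖ ^ ((finrank ℝ E : ℝ) + s) =
        h p.1 * (f p.1 - f p.2) / ‖p.1 - p.2‖ ^ ((finrank ℝ E : ℝ) + s) +
        h p.2 * (f p.2 - f p.1) / ‖p.2 - p.1‖ ^ ((finrank ℝ E : ℝ) + s) := by
    rw [norm_sub_rev p.2 p.1]
    ring
  have hint := integrable_mul_sub_div_norm_rpow hs hsr hh hf hb
  simp only [hsymm]
  exact ⟨hint, hint.add hint.swap, integral_prod_eq_half_smul_integral_add_comp_swap hint⟩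

/-- Symmetrization identity
`∬ θ(x)²(θ(x)−θ(y))/|x−y|^{n+s} = (1/2) ∬ (θ(x)+θ(y))(θ(x)−θ(y))²/|x−y|^{n+s}`,
together with the absolute convergence of both double integrals. -/
theorem symmetrization_identity (n : ℕ) (hn : 1 ≤ n) (s : ℝ) (hs : s ∈ Set.Ioo (0 : ℝ) 1)
    (θ : SchwartzMap (EuclideanSpace ℝ (Fin n)) ℝ) :
    Integrable (fun p : EuclideanSpace ℝ (Fin n) × EuclideanSpace ℝ (Fin n) =>
        (θ p.1) ^ 2 * (θ p.1 - θ p.2) / ‖p.1 - p.2‖ ^ ((n : ℝ) + s)) ∧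
    Integrable (fun p : EuclideanSpace ℝ (Fin n) × EuclideanSpace ℝ (Fin n) =>
        (θ p.1 + θ p.2) * (θ p.1 - θ p.2) ^ 2 / ‖p.1 - p.2‖ ^ ((n : ℝ) + s)) ∧
    ∫ p : EuclideanSpace ℝ (Fin n) × EuclideanSpace ℝ (Fin n),
        (θ p.1) ^ 2 * (θ p.1 - θ p.2) / ‖p.1 - p.2‖ ^ ((n : ℝ) + s) =
      (1 / 2) * ∫ p : EuclideanSpace ℝ (Fin n) × EuclideanSpace ℝ (Fin n),
        (θ p.1 + θ p.2) * (θ p.1 - θ p.2) ^ 2 / ‖p.1 - p.2‖ ^ ((n : ℝ) + s) := by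
  obtain ⟨C, hC⟩ := schwartzMap_exists_lipschitzWith_s5 θ
  have : Nonempty (Fin n) := Fin.pos_iff_nonempty.mp hn
  have hfactor (a b : ℝ) : (a + b) * (a - b) ^ 2 = (a ^ 2 - b ^ 2) * (a - b) := by ring
  simpa only [hfactor, finrank_euclideanSpace_fin, Measure.volume_eq_prod] using
    symmetrization_identity_general hs.1 (by simpa using hs.2) (θ.memLp 2).integrable_sq
      (holderWith_one.mpr hC) θ.toBoundedContinuousFunction.isBounded_range
end

section
/- Let n ≥ 1, s ∈ (0,1), and let θ : ℝⁿ → ℝ be a nonnegative Schwartz function. Then ∫_{ℝⁿ} θ(x)² · (∫_{ℝⁿ} (θ(x) − θ(x+y)) / |y|^{n+s} dy) dx ≥ 0. -/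
open MeasureTheory

/-!
Since `Φ(t) = t ^ 3 / 3` is convex on `[0, ∞)`, nonnegative `a` and `b` satisfy
`a ^ 2 * (a - b) ≥ Φ a - Φ b`. With `a = θ x` and `b = θ (x + y)`, translation invariance makes
the integral over `x` of the right-hand side vanish for every `y`. It remains to integrate against
the positive kernel `‖y‖ ^ (-(n + s))` and to exchange the two integrals, which is legitimate
because `|θ x - θ (x + y)| ≤ C * min ‖y‖ 1`, and `min ‖y‖ 1 / ‖y‖ ^ (n + s)` is integrable.
-/

open Module
open scoped NNReal

section Kernel

lemma integrableOn_Ioi_min_rpow_one_mul_rpow {r s : ℝ} (hs : 0 < s) (hsr : s < r) :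
    IntegrableOn (fun t : ℝ => min (t ^ r) 1 * t ^ (-1 - s)) (Set.Ioi 0) := by
  rw [← Set.Ioc_union_Ioi_eq_Ioi zero_le_one]
  refine IntegrableOn.union ?_ ?_
  · have near : IntegrableOn (fun t : ℝ => t ^ (r + (-1 - s))) (Set.Ioc 0 1) :=
      (intervalIntegrable_iff_integrableOn_Ioc_of_le zero_le_one).1
        (intervalIntegral.intervalIntegrable_rpow' (by linarith))
    refine near.congr_fun (fun t ht => ?_) measurableSet_Ioc
    simp only [min_eq_left (Real.rpow_le_one ht.1.le ht.2 (hs.trans hsr).le),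
      Real.rpow_add ht.1]
  · have far : IntegrableOn (fun t : ℝ => t ^ (-1 - s)) (Set.Ioi 1) :=
      integrableOn_Ioi_rpow_of_lt (by linarith) one_pos
    refine far.congr_fun (fun t (ht : 1 < t) => ?_) measurableSet_Ioi
    simp only [min_eq_right (Real.one_le_rpow ht.le (hs.trans hsr).le), one_mul]

variable {E : Type*} [NormedAddCommGroup E] [NormedSpace ℝ E] [FiniteDimensional ℝ E]
  [Nontrivial E] [MeasurableSpace E] [BorelSpace E]

lemma integrable_min_norm_rpow_one_div_norm_rpow (μ : Measure E) [μ.IsAddHaarMeasure] {r s : ℝ}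
    (hs : 0 < s) (hsr : s < r) :
    Integrable (fun y : E => min (‖y‖ ^ r) 1 / ‖y‖ ^ ((finrank ℝ E : ℝ) + s)) μ := by
  refine (integrable_fun_norm_addHaar μ
    (f := fun t : ℝ => min (t ^ r) 1 / t ^ ((finrank ℝ E : ℝ) + s))).2 ?_
  refine (integrableOn_Ioi_min_rpow_one_mul_rpow hs hsr).congr_fun (fun t (ht : 0 < t) => ?_)
    measurableSet_Ioi
  have hpow : t ^ (-1 - s) = t ^ (finrank ℝ E - 1) / t ^ ((finrank ℝ E : ℝ) + s) := by
    rw [← Real.rpow_natCast, Nat.cast_pred finrank_pos, ← Real.rpow_sub ht]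
    congr 1
    ring
  simp only [smul_eq_mul, hpow]
  ring

end Kernel

section Increments

lemma norm_sub_le_mul_min_of_holderWith {X F : Type*} [PseudoMetricSpace X]
    [SeminormedAddCommGroup F] {f : X → F} {C r : ℝ≥0} {M : ℝ} (hf : HolderWith C r f)
    (hM : ∀ x, ‖f x‖ ≤ M) (x z : X) :
    ‖f x - f z‖ ≤ max (C : ℝ) (2 * M) * min (dist x z ^ (r : ℝ)) 1 := by
  rw [mul_min_of_nonneg _ _ (C.coe_nonneg.trans (le_max_left _ _)), mul_one]
  refine le_min ?_ ?_
  · calc ‖f x - f z‖ ≤ C * dist x z ^ (r : ℝ) := by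
          rw [← dist_eq_norm]
          exact hf.dist_le x z
      _ ≤ max (C : ℝ) (2 * M) * dist x z ^ (r : ℝ) := by
          gcongr
          exact le_max_left _ _
  · calc ‖f x - f z‖ ≤ ‖f x‖ + ‖f z‖ := norm_sub_le _ _
      _ ≤ 2 * M := by linarith [hM x, hM z]
      _ ≤ max (C : ℝ) (2 * M) := le_max_right _ _

lemma exists_lipschitzWith_schwartzMap {E F : Type*} [NormedAddCommGroup E] [NormedSpace ℝ E]
    [NormedAddCommGroup F] [NormedSpace ℝ F] (f : SchwartzMap E F) :
    ∃ C, LipschitzWith C f :=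
  ⟨_, lipschitzWith_of_nnnorm_fderiv_le (C := ⟨_, apply_nonneg _ _⟩) f.differentiable
    fun x => SchwartzMap.norm_le_seminorm ℝ (SchwartzMap.fderivCLM ℝ E F f) x⟩

end Increments

section Translation

variable {G : Type*} [AddGroup G] [MeasurableSpace G] [MeasurableAdd G] {μ : Measure G}
  [μ.IsAddRightInvariant]

lemma integral_sub_comp_add_right_eq_zero {F : Type*} [NormedAddCommGroup F] [NormedSpace ℝ F]
    {f : G → F} (hf : Integrable f μ) (y : G) : ∫ x, (f x - f (x + y)) ∂μ = 0 := by
  rw [integral_sub hf (hf.comp_add_right y), integral_add_right_eq_self f y, sub_self]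

lemma integral_nonneg_of_sub_comp_add_right_le {Φ g : G → ℝ} {y : G} (hΦ : Integrable Φ μ)
    (hg : Integrable g μ) (hΦg : ∀ x, Φ x - Φ (x + y) ≤ g x) : 0 ≤ ∫ x, g x ∂μ :=
  calc 0 = ∫ x, (Φ x - Φ (x + y)) ∂μ := (integral_sub_comp_add_right_eq_zero hΦ y).symm
    _ ≤ ∫ x, g x ∂μ := integral_mono (hΦ.sub (hΦ.comp_add_right y)) hg hΦg

end Translation

section FractionalLaplacian

variable {E : Type*} [NormedAddCommGroup E] [NormedSpace ℝ E] [MeasurableSpace E]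

/-- The fractional Laplacian `Λ^s θ` as a singular integral with respect to `μ`, without its
positive normalization constant. The integral is not a principal value, so it takes the junk value
`0` wherever it does not converge absolutely. -/
noncomputable def fractionalLaplacian (μ : Measure E) (s : ℝ) (θ : E → ℝ) (x : E) : ℝ :=
  ∫ y, (θ x - θ (x + y)) / ‖y‖ ^ ((finrank ℝ E : ℝ) + s) ∂μ

variable [FiniteDimensional ℝ E] [Nontrivial E] [BorelSpace E] (μ : Measure E)
  [μ.IsAddHaarMeasure] {θ w : E → ℝ} {C r : ℝ≥0} {M s : ℝ}

lemma integrable_prod_mul_sub_div_norm_rpow (hs : 0 < s) (hsr : s < r) (hθ : HolderWith C r θ)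
    (hM : ∀ x, ‖θ x‖ ≤ M) (hw : Integrable w μ) :
    Integrable (fun p : E × E =>
      w p.1 * ((θ p.1 - θ (p.1 + p.2)) / ‖p.2‖ ^ ((finrank ℝ E : ℝ) + s))) (μ.prod μ) := by
  have hkernel := integrable_min_norm_rpow_one_div_norm_rpow μ hs hsr
  have hmeas : Measurable θ := (hθ.continuous (by exact_mod_cast hs.trans hsr)).measurable
  refine (hw.norm.mul_prod (hkernel.const_mul (max (C : ℝ) (2 * M)))).mono'
    (hw.aestronglyMeasurable.comp_fst.mul (Measurable.aestronglyMeasurable (by fun_prop)))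
    (.of_forall fun ⟨x, y⟩ => ?_)
  have hincr : ‖θ x - θ (x + y)‖ ≤ max (C : ℝ) (2 * M) * min (‖y‖ ^ (r : ℝ)) 1 := by
    simpa using norm_sub_le_mul_min_of_holderWith hθ hM x (x + y)
  rw [norm_mul, norm_div, Real.norm_of_nonneg (Real.rpow_nonneg (norm_nonneg y) _),
    ← mul_div_assoc (max (C : ℝ) (2 * M))]
  gcongr

/-- For a convex function `φ` with subgradient `φ'`, the hypothesis `hΦ` holds for `Φ = φ ∘ θ`
and `w = φ' ∘ θ`. -/
theorem integral_mul_fractionalLaplacian_nonneg_of_sub_le {Φ : E → ℝ} (hs : 0 < s) (hsr : s < r)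
    (hθ : HolderWith C r θ) (hM : ∀ x, ‖θ x‖ ≤ M) (hw : Integrable w μ)
    (hΦ_int : Integrable Φ μ) (hΦ : ∀ x z, Φ x - Φ z ≤ w x * (θ x - θ z)) :
    0 ≤ ∫ x, w x * fractionalLaplacian μ s θ x ∂μ := by
  have hcont : Continuous θ := hθ.continuous (by exact_mod_cast hs.trans hsr)
  have hslice (y : E) : 0 ≤ ∫ x, w x * (θ x - θ (x + y)) ∂μ := by
    refine integral_nonneg_of_sub_comp_add_right_le hΦ_int ?_ fun x => hΦ x (x + y)
    refine hw.mul_bdd (c := M + M) (Continuous.aestronglyMeasurable (by fun_prop)) ?_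
    exact .of_forall fun x => norm_sub_le_of_le (hM x) (hM (x + y))
  simp_rw [fractionalLaplacian, ← integral_const_mul]
  rw [integral_integral_swap (integrable_prod_mul_sub_div_norm_rpow μ hs hsr hθ hM hw)]
  refine integral_nonneg fun y => ?_
  simp_rw [← mul_div_assoc, integral_div]
  exact div_nonneg (hslice y) (by positivity)

theorem integral_sq_mul_fractionalLaplacian_nonneg_general (hs : 0 < s) (hsr : s < r)
    (hθ : HolderWith C r θ) (hM : ∀ x, ‖θ x‖ ≤ M) (hθ_sq : Integrable (fun x => θ x ^ 2) μ)
    (hθ_nonneg : ∀ x, 0 ≤ θ x) :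
    0 ≤ ∫ x, θ x ^ 2 * fractionalLaplacian μ s θ x ∂μ := by
  have hcont : Continuous θ := hθ.continuous (by exact_mod_cast hs.trans hsr)
  have hcube : Integrable (fun x => θ x ^ 3) μ := by
    simpa only [← pow_succ] using hθ_sq.mul_bdd hcont.aestronglyMeasurable (.of_forall hM)
  refine integral_mul_fractionalLaplacian_nonneg_of_sub_le μ hs hsr hθ hM hθ_sq
    (hcube.div_const 3) fun x z => ?_
  have hgap : θ x ^ 2 * (θ x - θ z) - (θ x ^ 3 / 3 - θ z ^ 3 / 3)
      = (2 * θ x + θ z) * (θ x - θ z) ^ 2 / 3 := by ring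
  have hx := hθ_nonneg x
  have hz := hθ_nonneg z
  exact sub_nonneg.1 (hgap ▸ by positivity)

end FractionalLaplacian

/-- The sign fact `∫ θ² Λ^s θ dx ≥ 0` for nonnegative Schwartz `θ` (fractional Laplacian written
without its normalization constant). -/
theorem integral_sq_mul_fractionalLaplacian_nonneg (n : ℕ) (hn : 1 ≤ n) (s : ℝ)
    (hs : s ∈ Set.Ioo (0 : ℝ) 1)
    (θ : SchwartzMap (EuclideanSpace ℝ (Fin n)) ℝ) (hθ : ∀ x, 0 ≤ θ x) :
    0 ≤ ∫ x : EuclideanSpace ℝ (Fin n),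
        (θ x) ^ 2 * ∫ y : EuclideanSpace ℝ (Fin n),
          (θ x - θ (x + y)) / ‖y‖ ^ ((n : ℝ) + s) := by
  have : NeZero n := ⟨by lia⟩
  obtain ⟨C, hC⟩ := exists_lipschitzWith_schwartzMap θ
  simpa [fractionalLaplacian] using
    integral_sq_mul_fractionalLaplacian_nonneg_general volume (r := 1) hs.1 hs.2
      (holderWith_one.2 hC) (SchwartzMap.norm_le_seminorm ℝ θ) (θ.memLp 2).integrable_sq hθ
end

section
/- Let n ≥ 2 and α ∈ (0, 1/2). There exists a constant C > 0, depending only on n and α, such that for every Schwartz function f : ℝⁿ → ℝ and all x, h ∈ ℝⁿ, the Euclidean norm of the vector ∫_{ℝⁿ} ((x − y)/|x − y|^{n+2α}) · (f(y+h) − f(y)) dy is at most C · (sup_{z ∈ ℝⁿ} |f(z)| + ‖f‖_{L²(ℝⁿ)}). -/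
open MeasureTheory

/-!
Near the origin the kernel `K z = z / |z|^s` is integrable to every power `p` with `p (s - 1) < n`,
and away from the origin to every power `q` with `n < q (s - 1)`. Cutting `K` at the unit sphere,
Hölder's inequality pairs the finite difference of `f` in `L^∞` with the near part of `K` in `L¹`,
and the finite difference in `L²` with the far part of `K` in `L²`. By translation invariance, a
finite difference at most doubles an `Lᵖ` norm, and the norms of the two parts of `K` do not depend
on `x`.
-/

open Metric Module
open scoped ENNReal

section Translation

variable {α β F : Type*} [MeasurableSpace α] [MeasurableSpace β] [NormedAddCommGroup F]
  {μ : Measure α} {ν : Measure β} {p : ℝ≥0∞}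

lemma lpNorm_comp_measurePreserving {g : β → F} {φ : α → β} (hg : AEStronglyMeasurable g ν)
    (hφ : MeasurePreserving φ μ ν) : lpNorm (g ∘ φ) p μ = lpNorm g p ν := by
  rw [← toReal_eLpNorm (hg.comp_measurePreserving hφ), eLpNorm_comp_measurePreserving hg hφ,
    toReal_eLpNorm hg]

lemma lpNorm_top_le_iSup_norm {f : α → F} (hf : BddAbove (Set.range fun x ↦ ‖f x‖)) :
    lpNorm f ∞ μ ≤ ⨆ x, ‖f x‖ := by
  have sup_nonneg : 0 ≤ ⨆ x, ‖f x‖ := Real.iSup_nonneg fun x ↦ norm_nonneg (f x)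
  by_cases hmeas : AEStronglyMeasurable f μ
  · rw [← toReal_eLpNorm hmeas]
    exact ENNReal.toReal_le_of_le_ofReal sup_nonneg
      (eLpNormEssSup_le_of_ae_bound (.of_forall fun x ↦ le_ciSup hf x))
  · rwa [lpNorm_of_not_aestronglyMeasurable hmeas]

variable [AddCommGroup α] [MeasurableAdd α] [μ.IsAddRightInvariant] {f : α → F}

lemma memLp_fwdDiff (hf : MemLp f p μ) (h : α) : MemLp (fwdDiff h f) p μ :=
  (hf.comp_measurePreserving (measurePreserving_add_right μ h)).sub hf

lemma lpNorm_fwdDiff_le (hf : MemLp f p μ) (hp : 1 ≤ p) (h : α) :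
    lpNorm (fwdDiff h f) p μ ≤ 2 * lpNorm f p μ := by
  have hadd := measurePreserving_add_right μ h
  calc lpNorm (fwdDiff h f) p μ
      ≤ lpNorm (f ∘ (· + h)) p μ + lpNorm f p μ :=
        lpNorm_sub_le (hf.comp_measurePreserving hadd) hp
    _ = 2 * lpNorm f p μ := by
        rw [lpNorm_comp_measurePreserving hf.aestronglyMeasurable hadd, two_mul]

end Translation

section Holder

variable {α 𝕜 F : Type*} [MeasurableSpace α] [NormedField 𝕜] [NormedAddCommGroup F]
  [NormedSpace ℝ F] [NormedSpace 𝕜 F]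
  {μ : Measure α} {p p' q q' : ℝ≥0∞} [p.HolderConjugate p'] [q.HolderConjugate q']

lemma norm_integral_smul_le_lpNorm_mul_lpNorm {φ : α → 𝕜} {g : α → F}
    (hφ : MemLp φ p μ) (hg : MemLp g p' μ) :
    ‖∫ x, φ x • g x ∂μ‖ ≤ lpNorm φ p μ * lpNorm g p' μ := by
  have hφg : MemLp (φ • g) 1 μ := hg.smul hφ
  calc ‖∫ x, φ x • g x ∂μ‖
      ≤ ∫ x, ‖(φ • g) x‖ ∂μ := norm_integral_le_integral_norm _
    _ = lpNorm (φ • g) 1 μ := (lpNorm_one_eq_integral_norm hφg.aestronglyMeasurable).symm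
    _ ≤ lpNorm φ p μ * lpNorm g p' μ := by
        rw [← toReal_eLpNorm hφg.1, ← toReal_eLpNorm hφ.1, ← toReal_eLpNorm hg.1,
          ← ENNReal.toReal_mul]
        exact ENNReal.toReal_mono (ENNReal.mul_ne_top hφ.eLpNorm_ne_top hg.eLpNorm_ne_top)
          (eLpNorm_smul_le_mul_eLpNorm hg.1 hφ.1)

variable [AddGroup α] [MeasurableAdd α] [MeasurableNeg α]
  [μ.IsAddLeftInvariant] [μ.IsNegInvariant]

lemma norm_integral_smul_add_comp_sub_left_le {g : α → 𝕜} {K₁ K₂ : α → F}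
    (hgp : MemLp g p μ) (hK₁ : MemLp K₁ p' μ) (hgq : MemLp g q μ) (hK₂ : MemLp K₂ q' μ) (x : α) :
    ‖∫ y, g y • (K₁ + K₂) (x - y) ∂μ‖ ≤
      lpNorm g p μ * lpNorm K₁ p' μ + lpNorm g q μ * lpNorm K₂ q' μ := by
  have hsub := μ.measurePreserving_sub_left x
  have hK₁x := hK₁.comp_measurePreserving hsub
  have hK₂x := hK₂.comp_measurePreserving hsub
  have hint₁ : Integrable (fun y ↦ g y • K₁ (x - y)) μ := memLp_one_iff_integrable.1 (hK₁x.smul hgp)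
  have hint₂ : Integrable (fun y ↦ g y • K₂ (x - y)) μ := memLp_one_iff_integrable.1 (hK₂x.smul hgq)
  simp only [Pi.add_apply, smul_add]
  rw [integral_add hint₁ hint₂, ← lpNorm_comp_measurePreserving hK₁.1 hsub,
    ← lpNorm_comp_measurePreserving hK₂.1 hsub]
  exact norm_add_le_of_le (norm_integral_smul_le_lpNorm_mul_lpNorm hgp hK₁x)
    (norm_integral_smul_le_lpNorm_mul_lpNorm hgq hK₂x)

end Holder

lemma norm_integral_fwdDiff_smul_add_comp_sub_left_le {α 𝕜 F : Type*} [MeasurableSpace α]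
    [NormedField 𝕜] [NormedAddCommGroup F] [NormedSpace ℝ F] [NormedSpace 𝕜 F] [AddCommGroup α]
    [MeasurableAdd α] [MeasurableNeg α] {μ : Measure α} [μ.IsAddLeftInvariant] [μ.IsNegInvariant]
    {p p' q q' : ℝ≥0∞} [p.HolderConjugate p'] [q.HolderConjugate q'] {f : α → 𝕜} {K₁ K₂ : α → F}
    (hfp : MemLp f p μ) (hK₁ : MemLp K₁ p' μ) (hfq : MemLp f q μ) (hK₂ : MemLp K₂ q' μ) (x h : α) :
    ‖∫ y, fwdDiff h f y • (K₁ + K₂) (x - y) ∂μ‖ ≤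
      2 * (lpNorm K₁ p' μ + lpNorm K₂ q' μ) * (lpNorm f p μ + lpNorm f q μ) := by
  have diff_p := lpNorm_fwdDiff_le hfp (ENNReal.HolderConjugate.one_le p p') h
  have diff_q := lpNorm_fwdDiff_le hfq (ENNReal.HolderConjugate.one_le q q') h
  have cross_p : 0 ≤ lpNorm f p μ * lpNorm K₂ q' μ := mul_nonneg lpNorm_nonneg lpNorm_nonneg
  have cross_q : 0 ≤ lpNorm f q μ * lpNorm K₁ p' μ := mul_nonneg lpNorm_nonneg lpNorm_nonneg
  calc ‖∫ y, fwdDiff h f y • (K₁ + K₂) (x - y) ∂μ‖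
      ≤ lpNorm (fwdDiff h f) p μ * lpNorm K₁ p' μ + lpNorm (fwdDiff h f) q μ * lpNorm K₂ q' μ :=
        norm_integral_smul_add_comp_sub_left_le (memLp_fwdDiff hfp h) hK₁
          (memLp_fwdDiff hfq h) hK₂ x
    _ ≤ 2 * lpNorm f p μ * lpNorm K₁ p' μ + 2 * lpNorm f q μ * lpNorm K₂ q' μ :=
        add_le_add (mul_le_mul_of_nonneg_right diff_p lpNorm_nonneg)
          (mul_le_mul_of_nonneg_right diff_q lpNorm_nonneg)
    _ ≤ 2 * (lpNorm K₁ p' μ + lpNorm K₂ q' μ) * (lpNorm f p μ + lpNorm f q μ) := by linarith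

section NormPower

variable {E : Type*} [NormedAddCommGroup E] [NormedSpace ℝ E] [FiniteDimensional ℝ E]
  [MeasurableSpace E] [BorelSpace E] {μ : Measure E} [μ.IsAddHaarMeasure]

lemma integrableOn_compl_ball_norm_rpow_neg {r R : ℝ} (hr : finrank ℝ E < r) (hR : 0 < R) :
    IntegrableOn (fun z : E ↦ ‖z‖ ^ (-r)) (ball 0 R)ᶜ μ := by
  have hr_nonneg : 0 ≤ r := (Nat.cast_nonneg _).trans hr.le
  refine (((integrable_one_add_norm hr).const_mul ((1 + R⁻¹) ^ r)).integrableOn).mono'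
    (measurable_norm.pow_const _).aestronglyMeasurable
    ((ae_restrict_iff' measurableSet_ball.compl).2 (.of_forall fun z hz ↦ ?_))
  have hRz : R ≤ ‖z‖ := by simpa using hz
  have hz_pos : 0 < ‖z‖ := hR.trans_le hRz
  have one_add_norm_le : 1 + ‖z‖ ≤ (1 + R⁻¹) * ‖z‖ := by
    have : 1 ≤ R⁻¹ * ‖z‖ := (le_inv_mul_iff₀ hR).2 (by simpa using hRz)
    linarith
  calc ‖‖z‖ ^ (-r)‖
      = (1 + R⁻¹) ^ r * ((1 + R⁻¹) * ‖z‖) ^ (-r) := by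
        rw [Real.norm_of_nonneg (by positivity), Real.mul_rpow (by positivity) hz_pos.le,
          ← mul_assoc, ← Real.rpow_add (by positivity), add_neg_cancel, Real.rpow_zero, one_mul]
    _ ≤ (1 + R⁻¹) ^ r * (1 + ‖z‖) ^ (-r) :=
        mul_le_mul_of_nonneg_left
          (Real.rpow_le_rpow_of_nonpos (by positivity) one_add_norm_le (neg_nonpos.2 hr_nonneg))
          (by positivity)

end NormPower

section Kernel

variable {E : Type*} [NormedAddCommGroup E] [NormedSpace ℝ E]

/-- The kernel `z / |z|^s`, which for `s ≠ 2` is a constant multiple of the gradient of the Riesz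
kernel `|z|^(2 - s)`. On `ℝⁿ` and for `s = n + 2α` it represents the velocity operator
`∇Λ^(-2 + 2α)`. -/
noncomputable def rieszGradientKernel (s : ℝ) (z : E) : E := (‖z‖ ^ s)⁻¹ • z

lemma norm_rieszGradientKernel_le (s : ℝ) (z : E) :
    ‖rieszGradientKernel s z‖ ≤ ‖z‖ ^ (-(s - 1)) := by
  obtain rfl | hz := eq_or_ne z 0
  · simpa [rieszGradientKernel] using Real.rpow_nonneg le_rfl (-(s - 1))
  · have hz : 0 < ‖z‖ := norm_pos_iff.2 hz
    rw [rieszGradientKernel, norm_smul, norm_inv, Real.norm_of_nonneg (by positivity),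
      neg_sub, sub_eq_neg_add, Real.rpow_add_one hz.ne', Real.rpow_neg hz.le]

lemma norm_rieszGradientKernel_rpow_le {t : ℝ} (ht : 0 ≤ t) (s : ℝ) (z : E) :
    ‖rieszGradientKernel s z‖ ^ t ≤ ‖z‖ ^ (-(t * (s - 1))) := by
  calc ‖rieszGradientKernel s z‖ ^ t
      ≤ (‖z‖ ^ (-(s - 1))) ^ t := by gcongr; exact norm_rieszGradientKernel_le s z
    _ = ‖z‖ ^ (-(t * (s - 1))) := by rw [← Real.rpow_mul (norm_nonneg z)]; ring_nf

variable [MeasurableSpace E] [BorelSpace E] [FiniteDimensional ℝ E]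

lemma measurable_rieszGradientKernel (s : ℝ) :
    Measurable (rieszGradientKernel s : E → E) := by
  unfold rieszGradientKernel
  fun_prop

variable {μ : Measure E} {p : ℝ≥0∞} {s R : ℝ}

lemma memLp_indicator_rieszGradientKernel_iff {S : Set E} (hS : MeasurableSet S)
    (hp₀ : p ≠ 0) (hp : p ≠ ∞) :
    MemLp (S.indicator (rieszGradientKernel s)) p μ ↔
      IntegrableOn (fun z ↦ ‖rieszGradientKernel s z‖ ^ p.toReal) S μ := by
  rw [memLp_indicator_iff_restrict hS, IntegrableOn,
    integrable_norm_rpow_iff (measurable_rieszGradientKernel s).aestronglyMeasurable hp₀ hp]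

variable [μ.IsAddHaarMeasure]

lemma memLp_indicator_ball_rieszGradientKernel (hp₀ : p ≠ 0) (hp : p ≠ ∞)
    (hs : p.toReal * (s - 1) < finrank ℝ E) :
    MemLp ((ball 0 R).indicator (rieszGradientKernel s : E → E)) p μ := by
  obtain _ | _ := subsingleton_or_nontrivial E
  · simp [Subsingleton.elim (rieszGradientKernel s : E → E) 0]
  rw [memLp_indicator_rieszGradientKernel_iff measurableSet_ball hp₀ hp]
  refine integrableOn_ball_of_norm_le_rpow (C := 1) finrank_pos hs (.of_forall fun z ↦ ?_)
    ((measurable_rieszGradientKernel s).norm.pow_const _).aestronglyMeasurable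
  rw [Real.norm_of_nonneg (by positivity), one_mul]
  exact norm_rieszGradientKernel_rpow_le ENNReal.toReal_nonneg s z

lemma memLp_indicator_compl_ball_rieszGradientKernel (hs : finrank ℝ E < p.toReal * (s - 1))
    (hR : 0 < R) : MemLp ((ball 0 R)ᶜ.indicator (rieszGradientKernel s : E → E)) p μ := by
  have toReal_ne_zero : p.toReal ≠ 0 := left_ne_zero_of_mul ((Nat.cast_nonneg _).trans_lt hs).ne'
  obtain ⟨hp₀, hp⟩ := ENNReal.toReal_ne_zero.1 toReal_ne_zero
  rw [memLp_indicator_rieszGradientKernel_iff measurableSet_ball.compl hp₀ hp]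
  refine (integrableOn_compl_ball_norm_rpow_neg hs hR).mono'
    ((measurable_rieszGradientKernel s).norm.pow_const _).aestronglyMeasurable
    (.of_forall fun z ↦ ?_)
  rw [Real.norm_of_nonneg (by positivity)]
  exact norm_rieszGradientKernel_rpow_le ENNReal.toReal_nonneg s z

theorem velocity_difference_bound_general (μ : Measure E) [μ.IsAddHaarMeasure]
    {p p' q q' : ℝ≥0∞} [p.HolderConjugate p'] [q.HolderConjugate q'] (hp' : p' ≠ ∞)
    (hs_near : p'.toReal * (s - 1) < finrank ℝ E) (hs_far : finrank ℝ E < q'.toReal * (s - 1)) :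
    ∃ C > (0 : ℝ), ∀ f : E → ℝ, MemLp f p μ → MemLp f q μ → ∀ x h : E,
      ‖∫ y, ((f (y + h) - f y) / ‖x - y‖ ^ s) • (x - y) ∂μ‖ ≤
        C * (lpNorm f p μ + lpNorm f q μ) := by
  let K : E → E := rieszGradientKernel s
  let near := (ball 0 1).indicator K
  let far := (ball 0 1)ᶜ.indicator K
  have hnear : MemLp near p' μ := memLp_indicator_ball_rieszGradientKernel
    (ENNReal.HolderConjugate.ne_zero p' p) hp' hs_near
  have hfar : MemLp far q' μ := memLp_indicator_compl_ball_rieszGradientKernel hs_far one_pos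
  have near_add_far : near + far = K := Set.indicator_self_add_compl _ _
  have norms_nonneg : 0 ≤ lpNorm near p' μ + lpNorm far q' μ :=
    add_nonneg lpNorm_nonneg lpNorm_nonneg
  refine ⟨2 * (lpNorm near p' μ + lpNorm far q' μ) + 1, by positivity, fun f hfp hfq x h ↦ ?_⟩
  calc ‖∫ y, ((f (y + h) - f y) / ‖x - y‖ ^ s) • (x - y) ∂μ‖
      = ‖∫ y, fwdDiff h f y • (near + far) (x - y) ∂μ‖ := by
        simp only [near_add_far, K, rieszGradientKernel, smul_smul, fwdDiff, div_eq_mul_inv]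
    _ ≤ 2 * (lpNorm near p' μ + lpNorm far q' μ) * (lpNorm f p μ + lpNorm f q μ) :=
        norm_integral_fwdDiff_smul_add_comp_sub_left_le hfp hnear hfq hfar x h
    _ ≤ (2 * (lpNorm near p' μ + lpNorm far q' μ) + 1) * (lpNorm f p μ + lpNorm f q μ) :=
        mul_le_mul_of_nonneg_right (le_add_of_nonneg_right zero_le_one)
          (add_nonneg lpNorm_nonneg lpNorm_nonneg)

end Kernel

/-- Uniform bound for the finite difference of the nonlocal velocity, `α ∈ (0, 1/2)`:
`|δ_h u(x)| ≤ C (‖f‖_∞ + ‖f‖_{L²})` (Riesz-kernel normalization constant removed). -/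
theorem velocity_difference_bound (n : ℕ) (hn : 2 ≤ n) (α : ℝ)
    (hα : α ∈ Set.Ioo (0 : ℝ) (1 / 2)) :
    ∃ C > (0 : ℝ), ∀ (f : SchwartzMap (EuclideanSpace ℝ (Fin n)) ℝ)
      (x h : EuclideanSpace ℝ (Fin n)),
      ‖∫ y : EuclideanSpace ℝ (Fin n),
          ((f (y + h) - f y) / ‖x - y‖ ^ ((n : ℝ) + 2 * α)) • (x - y)‖ ≤
        C * ((⨆ z : EuclideanSpace ℝ (Fin n), |f z|) + (eLpNorm (⇑f) 2 volume).toReal) := by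
  obtain ⟨hα₀, hα₁⟩ := hα
  have hn' : (2 : ℝ) ≤ n := by exact_mod_cast hn
  obtain ⟨C, hC, bound⟩ := velocity_difference_bound_general (s := n + 2 * α)
    (volume : Measure (EuclideanSpace ℝ (Fin n))) (p := ∞) (p' := 1) (q := 2) (q' := 2)
    ENNReal.one_ne_top (by simp; linarith) (by simp; linarith)
  refine ⟨C, hC, fun f x h ↦ (bound f (f.memLp_top _) (f.memLp 2) x h).trans ?_⟩
  have hbdd : BddAbove (Set.range fun z ↦ ‖f z‖) :=
    ⟨_, Set.forall_mem_range.2 f.toBoundedContinuousFunction.norm_coe_le_norm⟩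
  rw [toReal_eLpNorm f.continuous.aestronglyMeasurable]
  gcongr
  exact lpNorm_top_le_iSup_norm hbdd
end

section
/- Let n ≥ 2, α ∈ (0, 1/2], γ ∈ (0, 2α) and β ∈ (2α − γ, 2α). There exists a constant C > 0, depending only on n, γ and β, such that for every Schwartz function f : ℝⁿ → ℝ, every η ≥ 0, and all x, h ∈ ℝⁿ with h ≠ 0, setting ϑ(x,h) := (f(x+h) − f(x)) / (η² + |h|²)^{β/2} and M := sup_{x,h ∈ ℝⁿ} |ϑ(x,h)|, one has C · |h|^γ · M^{γ/(1−β)} · ∫_{ℝⁿ} |δ_h f(x) − δ_h f(x+y)|² / |y|^{n+γ} dy ≥ (η² + |h|²)^β · |ϑ(x,h)|^{2 + γ/(1−β)}. -/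
open MeasureTheory

/-!
Let `g = Δ_[h] f`. Over `N` consecutive steps `g` telescopes,
`∑ k < N, g (z + k • h) = f (z + N • h) - f z`, and the weighted bound `M` controls the right-hand
side by `M * N ^ β * (η ^ 2 + ‖h‖ ^ 2) ^ (β / 2)`, which grows sublinearly in `N` because `β < 1`.
Taking `N` comparable to `(2 * M / ϑ) ^ (1 / (1 - β))` makes the average of `g` along each such
progression at most `‖g x‖ / 2` in norm, so by Cauchy–Schwarz the mean of
`‖g x - g (z + k • h)‖ ^ 2` over `k` is at least `‖g x‖ ^ 2 / 4`. Integrating over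
`z ∈ ball x (N * ‖h‖)`, where every point `z + k • h` is within `2 * N * ‖h‖` of `x`, bounds the
nonlocal energy of `g` at `x` from below.
-/

open Finset Metric Module
open scoped fwdDiff NNReal

lemma sum_range_fwdDiff_nsmul {E G : Type*} [AddCommMonoid E] [AddCommGroup G] (f : E → G)
    (h z : E) (N : ℕ) :
    ∑ k ∈ range N, Δ_[h] f (z + k • h) = f (z + N • h) - f z := by
  have telescope := sum_range_sub (fun k : ℕ => f (z + k • h)) N
  simpa only [fwdDiff, succ_nsmul, add_assoc, zero_nsmul, add_zero] using telescope

lemma card_mul_norm_sq_le_sum_norm_sub_sq {ι F : Type*} [NormedAddCommGroup F] [NormedSpace ℝ F]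
    {s : Finset ι} {u : ι → F} {v : F}
    (hu : ‖∑ i ∈ s, u i‖ ≤ #s * (‖v‖ / 2)) :
    #s * (‖v‖ ^ 2 / 4) ≤ ∑ i ∈ s, ‖v - u i‖ ^ 2 := by
  rcases s.eq_empty_or_nonempty with rfl | hs
  · simp
  have card_pos : (0 : ℝ) < #s := by exact_mod_cast hs.card_pos
  have half_le : #s * (‖v‖ / 2) ≤ ∑ i ∈ s, ‖v - u i‖ :=
    calc #s * (‖v‖ / 2) ≤ #s * ‖v‖ - ‖∑ i ∈ s, u i‖ := by linarith
      _ = ‖#s • v‖ - ‖∑ i ∈ s, u i‖ := by rw [RCLike.norm_nsmul ℝ, nsmul_eq_mul]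
      _ ≤ ‖#s • v - ∑ i ∈ s, u i‖ := norm_sub_norm_le _ _
      _ = ‖∑ i ∈ s, (v - u i)‖ := by rw [sum_sub_distrib, sum_const]
      _ ≤ ∑ i ∈ s, ‖v - u i‖ := norm_sum_le _ _
  refine le_of_mul_le_mul_left ?_ card_pos
  calc #s * (#s * (‖v‖ ^ 2 / 4)) = (#s * (‖v‖ / 2)) ^ 2 := by ring
    _ ≤ (∑ i ∈ s, ‖v - u i‖) ^ 2 := by gcongr
    _ ≤ #s * ∑ i ∈ s, ‖v - u i‖ ^ 2 := sq_sum_le_card_mul_sum_sq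

lemma exists_nat_le_rpow_and_le_two_mul_rpow_inv {a p : ℝ} (ha : 1 ≤ a) (hp : 0 < p) :
    ∃ N : ℕ, 1 ≤ N ∧ a ≤ (N : ℝ) ^ p ∧ (N : ℝ) ≤ 2 * a ^ p⁻¹ := by
  have one_le : 1 ≤ a ^ p⁻¹ := Real.one_le_rpow ha (by positivity)
  have le_ceil := Nat.le_ceil (a ^ p⁻¹)
  refine ⟨⌈a ^ p⁻¹⌉₊, by exact_mod_cast one_le.trans le_ceil, ?_, ?_⟩
  · calc a = (a ^ p⁻¹) ^ p := (Real.rpow_inv_rpow (by linarith) hp.ne').symm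
      _ ≤ (⌈a ^ p⁻¹⌉₊ : ℝ) ^ p := by gcongr
  · linarith [Nat.ceil_lt_add_one (zero_le_one.trans one_le)]

lemma rpow_mul_rpow_le_of_le_two_mul_rpow_inv {M t p γ L : ℝ} (hM : 0 < M) (ht : 0 < t)
    (hγ : 0 ≤ γ) (hL₀ : 0 ≤ L) (hL : L ≤ 2 * (2 * M / t) ^ p⁻¹) :
    L ^ γ * t ^ (γ / p) ≤ 2 ^ γ * 2 ^ (γ / p) * M ^ (γ / p) :=
  calc L ^ γ * t ^ (γ / p) ≤ (2 * (2 * M / t) ^ p⁻¹) ^ γ * t ^ (γ / p) := by gcongr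
    _ = 2 ^ γ * ((2 * M / t) ^ (γ / p) * t ^ (γ / p)) := by
      rw [Real.mul_rpow two_pos.le (by positivity), ← Real.rpow_mul (by positivity),
        inv_mul_eq_div, mul_assoc]
    _ = 2 ^ γ * 2 ^ (γ / p) * M ^ (γ / p) := by
      rw [← Real.mul_rpow (by positivity) ht.le, div_mul_cancel₀ _ ht.ne',
        Real.mul_rpow two_pos.le hM.le, mul_assoc]

section BoundedLipschitz

variable {E F : Type*} [NormedAddCommGroup E] [NormedAddCommGroup F]

lemma norm_fwdDiff_sub_le_mul_min {f : E → F} {K : ℝ≥0}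
    (hf : ∀ x y, ‖f y - f x‖ ≤ K * min ‖y - x‖ 1) (h x y : E) :
    ‖Δ_[h] f y - Δ_[h] f x‖ ≤ (2 * K : ℝ≥0) * min ‖y - x‖ 1 := by
  have at_shifted := hf (x + h) (y + h)
  rw [add_sub_add_right_eq_sub] at at_shifted
  calc ‖Δ_[h] f y - Δ_[h] f x‖ = ‖(f (y + h) - f (x + h)) - (f y - f x)‖ := by
        simp only [fwdDiff]; congr 1; abel
    _ ≤ ‖f (y + h) - f (x + h)‖ + ‖f y - f x‖ := norm_sub_le _ _
    _ ≤ K * min ‖y - x‖ 1 + K * min ‖y - x‖ 1 := add_le_add at_shifted (hf x y)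
    _ = (2 * K : ℝ≥0) * min ‖y - x‖ 1 := by push_cast; ring

lemma norm_sub_le_mul_min_of_lipschitzWith {f : E → F} {K B : ℝ≥0} (hf : LipschitzWith K f)
    (hB : ∀ x, ‖f x‖ ≤ B) (x y : E) : ‖f y - f x‖ ≤ (K + 2 * B : ℝ≥0) * min ‖y - x‖ 1 := by
  have lip := hf.norm_sub_le y x
  have bdd : ‖f y - f x‖ ≤ 2 * B := by linarith [norm_sub_le (f y) (f x), hB x, hB y]
  push_cast
  rcases le_total ‖y - x‖ 1 with near | far
  · rw [min_eq_left near]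
    exact lip.trans (by gcongr; linarith [B.coe_nonneg])
  · rw [min_eq_right far]
    linarith [K.coe_nonneg]

lemma schwartz_exists_norm_sub_le_mul_min [NormedSpace ℝ E] [NormedSpace ℝ F]
    (f : SchwartzMap E F) : ∃ K : ℝ≥0, ∀ x y, ‖f y - f x‖ ≤ K * min ‖y - x‖ 1 := by
  obtain ⟨L, hL⟩ : ∃ L : ℝ≥0, L = SchwartzMap.seminorm ℝ 0 1 f := CanLift.prf _ (apply_nonneg _ _)
  obtain ⟨B, hB⟩ : ∃ B : ℝ≥0, B = SchwartzMap.seminorm ℝ 0 0 f := CanLift.prf _ (apply_nonneg _ _)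
  have lip : LipschitzWith L f :=
    lipschitzWith_of_nnnorm_fderiv_le (𝕜 := ℝ) f.differentiable fun x => by
      rw [← NNReal.coe_le_coe, coe_nnnorm, ← norm_iteratedFDeriv_one, hL]
      exact SchwartzMap.norm_iteratedFDeriv_le_seminorm ℝ f 1 x
  exact ⟨_, norm_sub_le_mul_min_of_lipschitzWith lip
    fun x => hB ▸ SchwartzMap.norm_le_seminorm ℝ f x⟩

end BoundedLipschitz

section Weight

variable {E F : Type*} [NormedAddCommGroup E] [NormedAddCommGroup F] {β η : ℝ}

/-- The regularized Hölder weight `(η² + |h|²)^{β/2}`, equal to `|h|^β` when `η = 0`. -/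
noncomputable def diffWeight (β η : ℝ) (h : E) : ℝ := (η ^ 2 + ‖h‖ ^ 2) ^ (β / 2)

/-- The size of the weighted finite difference, `|ϑ(x,h)|` in the paper's notation. Only the norm
enters the estimates, so it is defined as a real number even for vector-valued `f`. -/
noncomputable def weightedDiff (β η : ℝ) (f : E → F) (x h : E) : ℝ :=
  ‖Δ_[h] f x‖ / diffWeight β η h

lemma diffWeight_nonneg (β η : ℝ) (h : E) : 0 ≤ diffWeight β η h := by
  unfold diffWeight; positivity

lemma diffWeight_pos (β η : ℝ) {h : E} (hh : h ≠ 0) : 0 < diffWeight β η h := by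
  unfold diffWeight; positivity

lemma diffWeight_sq (β η : ℝ) (h : E) : diffWeight β η h ^ 2 = (η ^ 2 + ‖h‖ ^ 2) ^ β := by
  rw [diffWeight, ← Real.rpow_mul_natCast (by positivity)]
  norm_num

lemma norm_rpow_le_diffWeight (hβ : 0 ≤ β) (η : ℝ) (h : E) : ‖h‖ ^ β ≤ diffWeight β η h :=
  calc ‖h‖ ^ β = (‖h‖ ^ 2) ^ (β / 2) := by
        rw [← Real.rpow_natCast_mul (norm_nonneg h)]; congr 1; push_cast; ring
    _ ≤ (η ^ 2 + ‖h‖ ^ 2) ^ (β / 2) := by gcongr; linarith [sq_nonneg η]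

lemma diffWeight_nsmul_le [NormedSpace ℝ E] (hβ : 0 ≤ β) (η : ℝ) {N : ℕ} (hN : 1 ≤ N) (h : E) :
    diffWeight β η (N • h) ≤ (N : ℝ) ^ β * diffWeight β η h := by
  have one_le_sq : (1 : ℝ) ≤ (N : ℝ) ^ 2 := one_le_pow₀ (by exact_mod_cast hN)
  have base_le : η ^ 2 + ‖N • h‖ ^ 2 ≤ (N : ℝ) ^ 2 * (η ^ 2 + ‖h‖ ^ 2) := by
    rw [RCLike.norm_nsmul ℝ, nsmul_eq_mul]
    nlinarith [sq_nonneg η]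
  calc diffWeight β η (N • h) ≤ ((N : ℝ) ^ 2 * (η ^ 2 + ‖h‖ ^ 2)) ^ (β / 2) := by
        unfold diffWeight; gcongr
    _ = (N : ℝ) ^ β * diffWeight β η h := by
        rw [Real.mul_rpow (by positivity) (by positivity),
          ← Real.rpow_natCast_mul N.cast_nonneg, diffWeight]
        congr 2; push_cast; ring

lemma weightedDiff_nonneg (β η : ℝ) (f : E → F) (x h : E) : 0 ≤ weightedDiff β η f x h :=
  div_nonneg (norm_nonneg _) (diffWeight_nonneg β η h)

lemma weightedDiff_mul_diffWeight (β η : ℝ) (f : E → F) (x h : E) :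
    weightedDiff β η f x h * diffWeight β η h = ‖Δ_[h] f x‖ := by
  rcases eq_or_ne h 0 with rfl | hh
  · simp [weightedDiff, fwdDiff]
  · exact div_mul_cancel₀ _ (diffWeight_pos β η hh).ne'

lemma abs_sub_div_rpow_eq_weightedDiff (β η : ℝ) (f : E → ℝ) (x h : E) :
    |(f (x + h) - f x) / (η ^ 2 + ‖h‖ ^ 2) ^ (β / 2)| = weightedDiff β η f x h := by
  rw [abs_div, abs_of_nonneg (by positivity : 0 ≤ (η ^ 2 + ‖h‖ ^ 2) ^ (β / 2))]
  rfl

lemma weightedDiff_le (hβ₀ : 0 ≤ β) (hβ₁ : β ≤ 1) (η : ℝ) {f : E → F} {K : ℝ≥0}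
    (hf : ∀ x y, ‖f y - f x‖ ≤ K * min ‖y - x‖ 1) (x h : E) : weightedDiff β η f x h ≤ K := by
  have min_le : min ‖h‖ 1 ≤ ‖h‖ ^ β := by
    rcases le_total ‖h‖ 1 with h_le | le_h
    · exact (min_le_left _ _).trans (Real.self_le_rpow_of_le_one (norm_nonneg h) h_le hβ₁)
    · exact (min_le_right _ _).trans (Real.one_le_rpow le_h hβ₀)
  refine div_le_of_le_mul₀ (diffWeight_nonneg β η h) K.coe_nonneg ?_
  calc ‖Δ_[h] f x‖ ≤ K * min ‖h‖ 1 := by simpa [fwdDiff] using hf x (x + h)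
    _ ≤ K * diffWeight β η h := by gcongr; exact min_le.trans (norm_rpow_le_diffWeight hβ₀ η h)

lemma bddAbove_range_weightedDiff (hβ₀ : 0 ≤ β) (hβ₁ : β ≤ 1) (η : ℝ) {f : E → F} {K : ℝ≥0}
    (hf : ∀ x y, ‖f y - f x‖ ≤ K * min ‖y - x‖ 1) :
    BddAbove (Set.range fun p : E × E => weightedDiff β η f p.1 p.2) :=
  ⟨K, Set.forall_mem_range.2 fun p => weightedDiff_le hβ₀ hβ₁ η hf p.1 p.2⟩

lemma norm_sub_le_half_of_weightedDiff_le [NormedSpace ℝ E] (hβ : 0 ≤ β) {f : E → F} {M : ℝ}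
    (hM : ∀ z k, weightedDiff β η f z k ≤ M) {x h : E} {N : ℕ} (hN : 1 ≤ N)
    (hMN : 2 * M ≤ (N : ℝ) ^ (1 - β) * weightedDiff β η f x h) (z : E) :
    ‖f (z + N • h) - f z‖ ≤ N * (‖Δ_[h] f x‖ / 2) := by
  have hN₀ : (0 : ℝ) < N := by exact_mod_cast hN
  have M_nonneg : 0 ≤ M := (weightedDiff_nonneg β η f x h).trans (hM x h)
  have weight_nonneg := diffWeight_nonneg β η h
  have rpow_mul_rpow : (N : ℝ) ^ (1 - β) * (N : ℝ) ^ β = N := by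
    rw [← Real.rpow_add hN₀, sub_add_cancel, Real.rpow_one]
  calc ‖f (z + N • h) - f z‖ = weightedDiff β η f z (N • h) * diffWeight β η (N • h) :=
        (weightedDiff_mul_diffWeight β η f z (N • h)).symm
    _ ≤ M * ((N : ℝ) ^ β * diffWeight β η h) :=
        mul_le_mul (hM _ _) (diffWeight_nsmul_le hβ η hN h) (diffWeight_nonneg _ _ _) M_nonneg
    _ ≤ ((N : ℝ) ^ (1 - β) * weightedDiff β η f x h / 2) * ((N : ℝ) ^ β * diffWeight β η h) := by
        gcongr; linarith
    _ = ((N : ℝ) ^ (1 - β) * (N : ℝ) ^ β) * (weightedDiff β η f x h * diffWeight β η h / 2) := by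
        ring
    _ = N * (‖Δ_[h] f x‖ / 2) := by rw [rpow_mul_rpow, weightedDiff_mul_diffWeight]

end Weight

lemma measureReal_unitBall_pos {E : Type*} [NormedAddCommGroup E] [NormedSpace ℝ E]
    [FiniteDimensional ℝ E] [MeasurableSpace E] (μ : Measure E) [μ.IsAddHaarMeasure] :
    0 < μ.real (ball (0 : E) 1) :=
  ENNReal.toReal_pos (measure_ball_pos μ _ one_pos).ne' measure_ball_lt_top.ne

section Energy

variable {E F : Type*} [NormedAddCommGroup E] [NormedSpace ℝ E] [NormedAddCommGroup F] {γ : ℝ}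

/-- The integrand `|g(x) - g(x+y)|² / |y|^{n+γ}` of `nonlocalEnergy`, with `n = dim E`. -/
noncomputable def energyDensity (γ : ℝ) (g : E → F) (x y : E) : ℝ :=
  ‖g x - g (x + y)‖ ^ 2 / ‖y‖ ^ (finrank ℝ E + γ)

/-- The pointwise nonlocal energy `D_γ(g)(x)`. As a Bochner integral it takes the junk value `0`
when `energyDensity γ g x` is not integrable. -/
noncomputable def nonlocalEnergy [MeasurableSpace E] (μ : Measure E) (γ : ℝ) (g : E → F) (x : E) :
    ℝ :=
  ∫ y, energyDensity γ g x y ∂μ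

lemma energyDensity_nonneg (γ : ℝ) (g : E → F) (x y : E) : 0 ≤ energyDensity γ g x y := by
  unfold energyDensity; positivity

lemma norm_sub_sq_le_rpow_mul_energyDensity (hγ : 0 ≤ γ) (g : E → F) (x : E) {y : E} {r : ℝ}
    (hy : ‖y‖ ≤ r) :
    ‖g x - g (x + y)‖ ^ 2 ≤ r ^ (finrank ℝ E + γ) * energyDensity γ g x y := by
  rcases eq_or_ne y 0 with rfl | hy₀
  · have r_nonneg : 0 ≤ r := (norm_nonneg _).trans hy
    simpa using mul_nonneg (Real.rpow_nonneg r_nonneg _) (energyDensity_nonneg γ g x 0)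
  · calc ‖g x - g (x + y)‖ ^ 2 = ‖y‖ ^ (finrank ℝ E + γ) * energyDensity γ g x y :=
          (mul_div_cancel₀ _ (by positivity)).symm
      _ ≤ r ^ (finrank ℝ E + γ) * energyDensity γ g x y := by
          gcongr; exact energyDensity_nonneg γ g x y

variable [FiniteDimensional ℝ E] [MeasurableSpace E] [BorelSpace E] {μ : Measure E}
  [μ.IsAddHaarMeasure]

lemma mul_measureReal_ball_le_card_mul_nonlocalEnergy {ι : Type*} {s : Finset ι} {v : ι → E}
    {A R : ℝ} {g : E → F} {x : E} (hγ : 0 ≤ γ) (hint : Integrable (energyDensity γ g x) μ)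
    (hv : ∀ i ∈ s, ‖v i‖ ≤ R)
    (hA : ∀ y ∈ ball (0 : E) R, A ≤ ∑ i ∈ s, ‖g x - g (x + (y + v i))‖ ^ 2) :
    A * μ.real (ball 0 R) ≤ #s * ((2 * R) ^ (finrank ℝ E + γ) * nonlocalEnergy μ γ g x) := by
  set c := (2 * R) ^ (finrank ℝ E + γ)
  have c_nonneg (i) (hi : i ∈ s) : 0 ≤ c :=
    Real.rpow_nonneg (by linarith [(norm_nonneg _).trans (hv i hi)]) _
  have density_bound : ∀ y ∈ ball (0 : E) R, A ≤ ∑ i ∈ s, c * energyDensity γ g x (y + v i) := by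
    refine fun y hy => (hA y hy).trans (sum_le_sum fun i hi => ?_)
    refine norm_sub_sq_le_rpow_mul_energyDensity hγ g x ((norm_add_le _ _).trans ?_)
    linarith [hv i hi, mem_ball_zero_iff.1 hy]
  have translates_integrable (i) (_ : i ∈ s) :
      Integrable (fun y => c * energyDensity γ g x (y + v i)) μ :=
    (hint.comp_add_right (v i)).const_mul c
  have sum_integrable := integrable_finsetSum s translates_integrable
  calc A * μ.real (ball 0 R) = ∫ _ in ball (0 : E) R, A ∂μ := by
        rw [setIntegral_const, smul_eq_mul, mul_comm]
    _ ≤ ∫ y in ball (0 : E) R, ∑ i ∈ s, c * energyDensity γ g x (y + v i) ∂μ :=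
        setIntegral_mono_on (integrableOn_const measure_ball_lt_top.ne)
          sum_integrable.integrableOn measurableSet_ball density_bound
    _ ≤ ∫ y, ∑ i ∈ s, c * energyDensity γ g x (y + v i) ∂μ :=
        setIntegral_le_integral sum_integrable <| .of_forall fun y =>
          sum_nonneg fun i hi => mul_nonneg (c_nonneg i hi) (energyDensity_nonneg γ g x _)
    _ = ∑ i ∈ s, c * ∫ y, energyDensity γ g x (y + v i) ∂μ := by
        rw [integral_finsetSum s translates_integrable]
        simp only [integral_const_mul]
    _ = #s * (c * nonlocalEnergy μ γ g x) := by
        simp only [integral_add_right_eq_self, sum_const, nsmul_eq_mul, nonlocalEnergy]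

lemma norm_fwdDiff_sq_mul_measureReal_ball_le [NormedSpace ℝ F] {f : E → F} {x h : E} {N : ℕ}
    (hγ : 0 ≤ γ) (hN : 1 ≤ N) (hint : Integrable (energyDensity γ (Δ_[h] f) x) μ)
    (hf : ∀ z, ‖f (z + N • h) - f z‖ ≤ N * (‖Δ_[h] f x‖ / 2)) :
    ‖Δ_[h] f x‖ ^ 2 / 4 * μ.real (ball 0 (N * ‖h‖)) ≤
      (2 * (N * ‖h‖)) ^ (finrank ℝ E + γ) * nonlocalEnergy μ γ (Δ_[h] f) x := by
  have hN₀ : (0 : ℝ) < N := by exact_mod_cast hN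
  have steps_bounded : ∀ k ∈ range N, ‖k • h‖ ≤ N * ‖h‖ := fun k hk => by
    rw [RCLike.norm_nsmul ℝ, nsmul_eq_mul]
    gcongr
    exact (mem_range.1 hk).le
  have spread (y : E) : N * (‖Δ_[h] f x‖ ^ 2 / 4) ≤
      ∑ k ∈ range N, ‖Δ_[h] f x - Δ_[h] f (x + (y + k • h))‖ ^ 2 := by
    simp only [← add_assoc]
    simpa only [card_range] using card_mul_norm_sq_le_sum_norm_sub_sq (s := range N)
      (u := fun k => Δ_[h] f (x + y + k • h)) (v := Δ_[h] f x)
      (by simpa only [sum_range_fwdDiff_nsmul, card_range] using hf (x + y))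
  have bound := mul_measureReal_ball_le_card_mul_nonlocalEnergy hγ hint steps_bounded
    fun y _ => spread y
  rw [card_range, mul_assoc] at bound
  exact le_of_mul_le_mul_left bound hN₀

lemma norm_fwdDiff_sq_le_nonlocalEnergy [NormedSpace ℝ F] {f : E → F} {x h : E} {N : ℕ}
    (hγ : 0 ≤ γ) (hN : 1 ≤ N) (hh : h ≠ 0) (hint : Integrable (energyDensity γ (Δ_[h] f) x) μ)
    (hf : ∀ z, ‖f (z + N • h) - f z‖ ≤ N * (‖Δ_[h] f x‖ / 2)) :
    ‖Δ_[h] f x‖ ^ 2 ≤ 4 * 2 ^ (finrank ℝ E + γ) / μ.real (ball (0 : E) 1) * (N * ‖h‖) ^ γ *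
      nonlocalEnergy μ γ (Δ_[h] f) x := by
  have : Nontrivial E := nontrivial_of_ne h 0 hh
  have hR : 0 < N * ‖h‖ := mul_pos (by exact_mod_cast hN) (norm_pos_iff.2 hh)
  have bound := norm_fwdDiff_sq_mul_measureReal_ball_le hγ hN hint hf
  set R := N * ‖h‖
  set ω := μ.real (ball (0 : E) 1)
  have hω : 0 < ω := measureReal_unitBall_pos μ
  have ball_scaling : μ.real (ball (0 : E) R) = R ^ finrank ℝ E * ω := by
    rw [measureReal_def, Measure.addHaar_ball μ _ hR.le, ENNReal.toReal_mul,
      ENNReal.toReal_ofReal (by positivity)]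
    rfl
  have radius_split : (2 * R) ^ (finrank ℝ E + γ) =
      2 ^ (finrank ℝ E + γ) * (R ^ finrank ℝ E * R ^ γ) := by
    rw [Real.mul_rpow two_pos.le hR.le, Real.rpow_add hR, Real.rpow_natCast]
  rw [ball_scaling, radius_split] at bound
  have cancelled : ‖Δ_[h] f x‖ ^ 2 / 4 * ω ≤
      2 ^ (finrank ℝ E + γ) * R ^ γ * nonlocalEnergy μ γ (Δ_[h] f) x :=
    le_of_mul_le_mul_left (by linarith) (pow_pos hR (finrank ℝ E))
  calc ‖Δ_[h] f x‖ ^ 2 = 4 / ω * (‖Δ_[h] f x‖ ^ 2 / 4 * ω) := by field_simp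
    _ ≤ 4 / ω * (2 ^ (finrank ℝ E + γ) * R ^ γ * nonlocalEnergy μ γ (Δ_[h] f) x) := by gcongr
    _ = _ := by ring

end Energy

section Integrability

variable {γ : ℝ}

lemma integrableOn_min_one_sq_mul_rpow (hγ₀ : 0 < γ) (hγ₂ : γ < 2) :
    IntegrableOn (fun r : ℝ => min r 1 ^ 2 * r ^ (-1 - γ)) (Set.Ioi 0) := by
  rw [← Set.Ioc_union_Ioi_eq_Ioi (zero_le_one' ℝ)]
  refine IntegrableOn.union ?_ ?_
  · have near_zero : IntegrableOn (fun r : ℝ => r ^ (1 - γ)) (Set.Ioc 0 1) := by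
      rw [integrableOn_Ioc_iff_integrableOn_Ioo]
      exact (intervalIntegral.integrableOn_Ioo_rpow_iff one_pos).2 (by linarith)
    refine near_zero.congr_fun (fun r hr => ?_) measurableSet_Ioc
    simp only [min_eq_left hr.2, ← Real.rpow_natCast, ← Real.rpow_add hr.1]
    congr 1; push_cast; ring
  · refine (integrableOn_Ioi_rpow_of_lt (a := -1 - γ) (by linarith) one_pos).congr_fun
      (fun r (hr : 1 < r) => ?_) measurableSet_Ioi
    simp only [min_eq_right hr.le, one_pow, one_mul]

variable {E F : Type*} [NormedAddCommGroup E] [NormedSpace ℝ E] [FiniteDimensional ℝ E]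
  [Nontrivial E] [MeasurableSpace E] [BorelSpace E] [NormedAddCommGroup F]

lemma integrable_min_norm_one_sq_div_rpow (μ : Measure E) [μ.IsAddHaarMeasure] (hγ₀ : 0 < γ)
    (hγ₂ : γ < 2) :
    Integrable (fun y : E => min ‖y‖ 1 ^ 2 / ‖y‖ ^ (finrank ℝ E + γ)) μ := by
  refine (integrable_fun_norm_addHaar μ
    (f := fun r => min r 1 ^ 2 / r ^ (finrank ℝ E + γ))).2 <|
      (integrableOn_min_one_sq_mul_rpow hγ₀ hγ₂).congr_fun (fun r (hr : 0 < r) => ?_)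
        measurableSet_Ioi
  have jacobian : r ^ (finrank ℝ E - 1) / r ^ (finrank ℝ E + γ) = r ^ (-1 - γ) := by
    rw [← Real.rpow_natCast, ← Real.rpow_sub hr, Nat.cast_pred finrank_pos]
    congr 1; ring
  simp only [← jacobian, smul_eq_mul]
  ring

lemma integrable_energyDensity {μ : Measure E} [μ.IsAddHaarMeasure] (hγ₀ : 0 < γ) (hγ₂ : γ < 2)
    {g : E → F} {K : ℝ≥0} (hg : ∀ x y, ‖g y - g x‖ ≤ K * min ‖y - x‖ 1) (x : E) :
    Integrable (energyDensity γ g x) μ := by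
  have g_continuous : Continuous g := by
    refine (LipschitzWith.of_dist_le_mul (K := K) fun y x => ?_).continuous
    rw [dist_eq_norm, dist_eq_norm]
    exact (hg x y).trans (by gcongr; exact min_le_left _ _)
  refine ((integrable_min_norm_one_sq_div_rpow μ hγ₀ hγ₂).const_mul ((K : ℝ) ^ 2)).mono'
    (Measurable.aestronglyMeasurable ?_) (.of_forall fun y => ?_)
  · have numerator : Measurable fun y => ‖g x - g (x + y)‖ :=
      Continuous.measurable (by fun_prop)
    unfold energyDensity
    fun_prop
  · have increment_le : ‖g x - g (x + y)‖ ≤ K * min ‖y‖ 1 := by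
      simpa [norm_sub_rev (g x)] using hg x (x + y)
    rw [Real.norm_of_nonneg (energyDensity_nonneg γ g x y), ← mul_div_assoc, ← mul_pow]
    unfold energyDensity
    gcongr

end Integrability

section LowerBound

variable {E F : Type*} [NormedAddCommGroup E] [NormedSpace ℝ E] [FiniteDimensional ℝ E]
  [MeasurableSpace E] [NormedAddCommGroup F] [NormedSpace ℝ F]

/-- The constant `C` of the weighted lower bound. The factor `4 * 2 ^ (n + γ) / μ (ball 0 1)` comes
from the energy estimate at a fixed number `N` of steps, and the other two from the choice
`N ≤ 2 * (2 * M / ϑ) ^ (1 / (1 - β))`. -/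
noncomputable def lowerBoundConst (μ : Measure E) (γ β : ℝ) : ℝ :=
  4 * 2 ^ (finrank ℝ E + γ) / μ.real (ball (0 : E) 1) * 2 ^ γ * 2 ^ (γ / (1 - β))

lemma lowerBoundConst_pos (μ : Measure E) [μ.IsAddHaarMeasure] (γ β : ℝ) :
    0 < lowerBoundConst μ γ β := by
  have hω := measureReal_unitBall_pos μ
  unfold lowerBoundConst
  positivity

theorem weighted_difference_lower_bound_general [BorelSpace E] {μ : Measure E}
    [μ.IsAddHaarMeasure] {γ β η M : ℝ} (hγ : 0 ≤ γ) (hβ₀ : 0 ≤ β) (hβ₁ : β < 1)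
    {f : E → F} (hM : ∀ z k, weightedDiff β η f z k ≤ M) {x h : E} (hh : h ≠ 0)
    (hint : Integrable (energyDensity γ (Δ_[h] f) x) μ) :
    (η ^ 2 + ‖h‖ ^ 2) ^ β * weightedDiff β η f x h ^ (2 + γ / (1 - β)) ≤
      lowerBoundConst μ γ β * ‖h‖ ^ γ * M ^ (γ / (1 - β)) *
        nonlocalEnergy μ γ (Δ_[h] f) x := by
  have hp : 0 < 1 - β := sub_pos.2 hβ₁
  have hD : 0 ≤ nonlocalEnergy μ γ (Δ_[h] f) x :=
    integral_nonneg (energyDensity_nonneg γ _ x)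
  have hC := lowerBoundConst_pos μ γ β
  have diff_eq := weightedDiff_mul_diffWeight β η f x h
  have le_M := hM x h
  set t := weightedDiff β η f x h
  set q := γ / (1 - β)
  have t_nonneg : 0 ≤ t := weightedDiff_nonneg β η f x h
  obtain t_zero | t_pos := t_nonneg.eq_or_lt
  · rw [← t_zero, Real.zero_rpow (by positivity), mul_zero]
    have : 0 ≤ M := t_zero.le.trans le_M
    positivity
  have M_pos : 0 < M := t_pos.trans_le le_M
  obtain ⟨N, one_le_N, le_N, N_le⟩ := exists_nat_le_rpow_and_le_two_mul_rpow_inv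
    (a := 2 * M / t) (by rw [one_le_div t_pos]; linarith) hp
  have energy_bound := norm_fwdDiff_sq_le_nonlocalEnergy hγ one_le_N hh hint
    (norm_sub_le_half_of_weightedDiff_le hβ₀ hM one_le_N ((div_le_iff₀ t_pos).1 le_N))
  have steps_bound := rpow_mul_rpow_le_of_le_two_mul_rpow_inv M_pos t_pos hγ N.cast_nonneg N_le
  calc (η ^ 2 + ‖h‖ ^ 2) ^ β * t ^ (2 + q) = ‖Δ_[h] f x‖ ^ 2 * t ^ q := by
        rw [Real.rpow_add t_pos, Real.rpow_two, ← diffWeight_sq, ← diff_eq]; ring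
    _ ≤ 4 * 2 ^ (finrank ℝ E + γ) / μ.real (ball (0 : E) 1) * (N * ‖h‖) ^ γ *
          nonlocalEnergy μ γ (Δ_[h] f) x * t ^ q := by gcongr
    _ = 4 * 2 ^ (finrank ℝ E + γ) / μ.real (ball (0 : E) 1) * ‖h‖ ^ γ *
          nonlocalEnergy μ γ (Δ_[h] f) x * ((N : ℝ) ^ γ * t ^ q) := by
        rw [Real.mul_rpow N.cast_nonneg (norm_nonneg h)]; ring
    _ ≤ 4 * 2 ^ (finrank ℝ E + γ) / μ.real (ball (0 : E) 1) * ‖h‖ ^ γ *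
          nonlocalEnergy μ γ (Δ_[h] f) x * (2 ^ γ * 2 ^ q * M ^ q) := by gcongr
    _ = lowerBoundConst μ γ β * ‖h‖ ^ γ * M ^ q * nonlocalEnergy μ γ (Δ_[h] f) x := by
        rw [lowerBoundConst]; ring

end LowerBound

/-- Weighted nonlinear lower bound for finite differences: with
`ϑ(x,h) = δ_h f(x)/(η²+|h|²)^{β/2}` and `M = sup |ϑ|`, one has
`D_γ(δ_h f)(x)/(η²+|h|²)^β ≥ (|ϑ|/M)^{γ/(1−β)} |ϑ|² / (C |h|^γ)`, the constant `C`
depending only on `n`, `γ` and `β`. -/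
theorem weighted_difference_lower_bound (n : ℕ) (hn : 2 ≤ n) (γ β : ℝ)
    (hγ : 0 < γ) (hβ : 0 < β) :
    ∃ C > (0 : ℝ), ∀ (α : ℝ), 0 < α → α ≤ 1 / 2 → γ < 2 * α → 2 * α - γ < β → β < 2 * α →
      ∀ (f : SchwartzMap (EuclideanSpace ℝ (Fin n)) ℝ) (η : ℝ), 0 ≤ η →
      ∀ (x h : EuclideanSpace ℝ (Fin n)), h ≠ 0 →
      C * ‖h‖ ^ γ *
          (⨆ p : EuclideanSpace ℝ (Fin n) × EuclideanSpace ℝ (Fin n),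
            |(f (p.1 + p.2) - f p.1) / (η ^ 2 + ‖p.2‖ ^ 2) ^ (β / 2)|) ^ (γ / (1 - β)) *
          ∫ y : EuclideanSpace ℝ (Fin n),
            |(f (x + h) - f x) - (f (x + y + h) - f (x + y))| ^ 2 / ‖y‖ ^ ((n : ℝ) + γ) ≥
        (η ^ 2 + ‖h‖ ^ 2) ^ β *
          |(f (x + h) - f x) / (η ^ 2 + ‖h‖ ^ 2) ^ (β / 2)| ^ (2 + γ / (1 - β)) := by
  refine ⟨lowerBoundConst (E := EuclideanSpace ℝ (Fin n)) volume γ β,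
    lowerBoundConst_pos volume γ β, fun α _ hα hγα _ hβα f η _ x h hh => ?_⟩
  have : Nontrivial (EuclideanSpace ℝ (Fin n)) := nontrivial_of_ne h 0 hh
  obtain ⟨K, hK⟩ := schwartz_exists_norm_sub_le_mul_min f
  have bounded := bddAbove_range_weightedDiff hβ.le (by linarith) η hK
  have integrable : Integrable (energyDensity γ (Δ_[h] f) x) :=
    integrable_energyDensity hγ (by linarith) (norm_fwdDiff_sub_le_mul_min hK h) x
  simpa only [abs_sub_div_rpow_eq_weightedDiff, nonlocalEnergy, energyDensity, fwdDiff,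
    finrank_euclideanSpace_fin, Real.norm_eq_abs, ge_iff_le] using
    weighted_difference_lower_bound_general hγ.le hβ.le (by linarith)
      (fun z k => le_ciSup bounded (z, k)) hh integrable
end
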